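/- arXiv:2002.11796 — 2 statements merged into one kernel-verified Lean document; each statement's English description precedes it below -/
import Mathlib

section
/- For partitions λ and μ with μ ⊆ λ and conjugates λ', μ', the generalized skew Schur function satisfies the dual Jacobi–Trudi type identity s_{λ/μ}(X) = det( e_{λ'_i − μ'_j − i + j}(τ^{−μ'_j + j − 1} X) )_{1 ≤ i,j ≤ l'}, where l' = λ_1, e_r(τ^m X) = s_{(1^r)}(τ^m X) for r ≥ 1, e_0(τ^m X) = 1, and e_r(τ^m X) = 0 for r < 0. -/
open Finset
open scoped Classical


/-- Boxes of the skew Young diagram of `lam/mu` (0-indexed rows and columns):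
box `(i,j)` with `i < l` and `mu i ≤ j < lam i`. -/
def skewCells (lam mu : ℕ → ℕ) (l : ℕ) : Finset (ℕ × ℕ) :=
  (Finset.range l ×ˢ Finset.range (lam 0)).filter fun p => mu p.1 ≤ p.2 ∧ p.2 < lam p.1

/-- Content of a box `(i,j)` is `j - i`. -/
def content (p : ℕ × ℕ) : ℤ := (p.2 : ℤ) - (p.1 : ℤ)

/-- The ninth variation (generalized) skew Schur function: the sum over semistandard
fillings of the cell set `C` with entries in `Fin n` of the product of the
content-dependent weights `X entry content`. -/
noncomputable def schurGen {R : Type*} [CommRing R] (n : ℕ) (C : Finset (ℕ × ℕ))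
    (X : Fin n → ℤ → R) : R :=
  ∑ T ∈ Finset.univ.filter (fun T : {p // p ∈ C} → Fin n =>
      (∀ p q : {p // p ∈ C}, (q : ℕ × ℕ).1 = (p : ℕ × ℕ).1 ∧
          (q : ℕ × ℕ).2 = (p : ℕ × ℕ).2 + 1 → T p ≤ T q) ∧
      (∀ p q : {p // p ∈ C}, (q : ℕ × ℕ).1 = (p : ℕ × ℕ).1 + 1 ∧
          (q : ℕ × ℕ).2 = (p : ℕ × ℕ).2 → T p < T q)),
    ∏ p : {p // p ∈ C}, X (T p) (content (p : ℕ × ℕ))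

/-- Cells of a single row of `r` boxes, with contents `0, 1, …, r-1`. -/
def rowCells (r : ℕ) : Finset (ℕ × ℕ) := (Finset.range r).image fun j => (0, j)

/-- Cells of a single column of `r` boxes, with contents `0, -1, …, -(r-1)`. -/
def colCells (r : ℕ) : Finset (ℕ × ℕ) := (Finset.range r).image fun i => (i, 0)

/-- `h_r(τ^m X)`: the generalized complete homogeneous function, a one-row
generalized Schur function with leftmost content `m`; it is `1` for `r = 0`
and `0` for `r < 0`. -/
noncomputable def hGen {R : Type*} [CommRing R] (n : ℕ) (r m : ℤ) (X : Fin n → ℤ → R) : R :=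
  if r < 0 then 0 else schurGen n (rowCells r.toNat) fun k c => X k (m + c)

/-- `e_r(τ^m X)`: the generalized elementary function, a one-column generalized
Schur function with topmost content `m`; it is `1` for `r = 0` and `0` for `r < 0`. -/
noncomputable def eGen {R : Type*} [CommRing R] (n : ℕ) (r m : ℤ) (X : Fin n → ℤ → R) : R :=
  if r < 0 then 0 else schurGen n (colCells r.toNat) fun k c => X k (m + c)

/-- The conjugate partition: `(conj lam l) j` is the length of column `j`
(0-indexed) of the Young diagram of `lam`, whose rows are indexed below `l`. -/
def conjPart (lam : ℕ → ℕ) (l : ℕ) : ℕ → ℕ :=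
  fun j => ((Finset.range l).filter fun i => j < lam i).card

/-- Semistandardness of a filling of an arbitrary finite set of cells. -/
def IsSemistandard {n : ℕ} {C : Finset (ℕ × ℕ)} (T : {p // p ∈ C} → Fin n) : Prop :=
  (∀ p q : {p // p ∈ C}, (q : ℕ × ℕ).1 = (p : ℕ × ℕ).1 ∧
      (q : ℕ × ℕ).2 = (p : ℕ × ℕ).2 + 1 → T p ≤ T q) ∧
  (∀ p q : {p // p ∈ C}, (q : ℕ × ℕ).1 = (p : ℕ × ℕ).1 + 1 ∧
      (q : ℕ × ℕ).2 = (p : ℕ × ℕ).2 → T p < T q)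

theorem schurGen_eq {R : Type*} [CommRing R] (n : ℕ) (C : Finset (ℕ × ℕ)) (X : Fin n → ℤ → R) :
    schurGen n C X = ∑ T : {p // p ∈ C} → Fin n with IsSemistandard T,
      ∏ p : {p // p ∈ C}, X (T p) (content (p : ℕ × ℕ)) := by
  unfold schurGen IsSemistandard
  congr!

/-- The sets of cells of `C` that can carry the largest entry of a semistandard filling. -/
def IsOuterStrip (C U : Finset (ℕ × ℕ)) : Prop :=
  U ⊆ C ∧ (∀ i j, (i, j) ∈ U → (i, j + 1) ∈ C → (i, j + 1) ∈ U) ∧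
    ∀ i j, (i, j) ∈ U → (i + 1, j) ∉ C

/-- Extend a filling of `C` to all cells by the new largest entry. -/
noncomputable def extendLast {n : ℕ} {C : Finset (ℕ × ℕ)} (T : {p // p ∈ C} → Fin n)
    (p : ℕ × ℕ) : Fin (n + 1) :=
  if h : p ∈ C then (T ⟨p, h⟩).castSucc else Fin.last n

theorem extendLast_of_mem {n : ℕ} {C : Finset (ℕ × ℕ)} (T : {p // p ∈ C} → Fin n)
    {p : ℕ × ℕ} (h : p ∈ C) : extendLast T p = (T ⟨p, h⟩).castSucc := dif_pos h

theorem extendLast_of_notMem {n : ℕ} {C : Finset (ℕ × ℕ)} (T : {p // p ∈ C} → Fin n)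
    {p : ℕ × ℕ} (h : p ∉ C) : extendLast T p = Fin.last n := dif_neg h

theorem extendLast_eq_last_iff {n : ℕ} {C : Finset (ℕ × ℕ)} (T : {p // p ∈ C} → Fin n)
    (p : ℕ × ℕ) : extendLast T p = Fin.last n ↔ p ∉ C := by
  by_cases h : p ∈ C
  · simp [extendLast_of_mem T h, h, (Fin.castSucc_lt_last _).ne]
  · simp [extendLast_of_notMem T h, h]

/-- The cells carrying the largest entry. -/
noncomputable def lastCells {n : ℕ} {C : Finset (ℕ × ℕ)} (T : {p // p ∈ C} → Fin (n + 1)) :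
    Finset (ℕ × ℕ) :=
  C.filter fun p => ∃ h : p ∈ C, T ⟨p, h⟩ = Fin.last n

theorem mem_lastCells {n : ℕ} {C : Finset (ℕ × ℕ)} (T : {p // p ∈ C} → Fin (n + 1))
    (p : ℕ × ℕ) : p ∈ lastCells T ↔ ∃ h : p ∈ C, T ⟨p, h⟩ = Fin.last n := by
  simp only [lastCells, Finset.mem_filter, and_iff_right_iff_imp]
  exact fun h => h.1

theorem IsSemistandard.isOuterStrip {n : ℕ} {C : Finset (ℕ × ℕ)}
    {T : {p // p ∈ C} → Fin (n + 1)} (hT : IsSemistandard T) : IsOuterStrip C (lastCells T) := by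
  refine ⟨Finset.filter_subset _ _, fun i j h h' => ?_, fun i j h h' => ?_⟩
  · obtain ⟨h1, h2⟩ := (mem_lastCells T _).1 h
    have := hT.1 ⟨_, h1⟩ ⟨_, h'⟩ ⟨rfl, rfl⟩
    exact (mem_lastCells T _).2 ⟨h', Fin.last_le_iff.1 (h2 ▸ this)⟩
  · obtain ⟨h1, h2⟩ := (mem_lastCells T _).1 h
    have := hT.2 ⟨_, h1⟩ ⟨_, h'⟩ ⟨rfl, rfl⟩
    rw [h2] at this
    exact absurd this (Fin.le_last _).not_gt

theorem isSemistandard_extendLast {n : ℕ} {C U : Finset (ℕ × ℕ)} (hU : IsOuterStrip C U)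
    {T : {p // p ∈ C \ U} → Fin n} (hT : IsSemistandard T) :
    IsSemistandard fun p : {p // p ∈ C} => extendLast T p := by
  refine ⟨?_, ?_⟩
  · rintro ⟨⟨i, j⟩, hp⟩ ⟨⟨i', j'⟩, hq⟩ ⟨h1, h2⟩
    dsimp only at h1 h2 ⊢
    subst h1 h2
    by_cases hq' : (i', j + 1) ∈ C \ U
    · have hp' : (i', j) ∈ C \ U := by
        simp only [Finset.mem_sdiff] at hq' ⊢
        exact ⟨hp, fun h => hq'.2 (hU.2.1 _ _ h hq)⟩
      rw [extendLast_of_mem T hq', extendLast_of_mem T hp', Fin.castSucc_le_castSucc_iff]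
      exact hT.1 _ _ ⟨rfl, rfl⟩
    · rw [extendLast_of_notMem T hq']
      exact Fin.le_last _
  · rintro ⟨⟨i, j⟩, hp⟩ ⟨⟨i', j'⟩, hq⟩ ⟨h1, h2⟩
    dsimp only at h1 h2 ⊢
    subst h1 h2
    have hp' : (i, j') ∈ C \ U := by
      simp only [Finset.mem_sdiff]
      exact ⟨hp, fun h => hU.2.2 _ _ h hq⟩
    rw [extendLast_of_mem T hp']
    by_cases hq' : (i + 1, j') ∈ C \ U
    · rw [extendLast_of_mem T hq', Fin.castSucc_lt_castSucc_iff]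
      exact hT.2 _ _ ⟨rfl, rfl⟩
    · rw [extendLast_of_notMem T hq']
      exact Fin.castSucc_lt_last _

theorem lastCells_extendLast {n : ℕ} {C U : Finset (ℕ × ℕ)} (hU : U ⊆ C)
    (T : {p // p ∈ C \ U} → Fin n) :
    lastCells (fun p : {p // p ∈ C} => extendLast T p) = U := by
  ext p
  simp only [mem_lastCells, extendLast_eq_last_iff, Finset.mem_sdiff]
  constructor
  · rintro ⟨h, h'⟩
    tauto
  · intro h
    exact ⟨hU h, fun h' => h'.2 h⟩

theorem prod_extendLast {R : Type*} [CommRing R] {n : ℕ} {C U : Finset (ℕ × ℕ)} (hU : U ⊆ C)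
    (T : {p // p ∈ C \ U} → Fin n) (X : Fin (n + 1) → ℤ → R) :
    ∏ p : {p // p ∈ C}, X (extendLast T p) (content p) =
      (∏ p : {p // p ∈ C \ U}, X (T p).castSucc (content p)) *
        ∏ p ∈ U, X (Fin.last n) (content p) := by
  rw [Finset.prod_coe_sort C fun p => X (extendLast T p) (content p), ← Finset.prod_sdiff hU]
  congr 1
  · rw [← Finset.prod_coe_sort]
    refine Finset.prod_congr rfl fun p _ => ?_
    rw [extendLast_of_mem T p.2]
  · refine Finset.prod_congr rfl fun p hp => ?_
    rw [extendLast_of_notMem]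
    simp [hp]

/-- Removing the largest entry from semistandard fillings. -/
theorem schurGen_succ {R : Type*} [CommRing R] (n : ℕ) (C : Finset (ℕ × ℕ))
    (X : Fin (n + 1) → ℤ → R) :
    schurGen (n + 1) C X = ∑ U ∈ C.powerset with IsOuterStrip C U,
      (∏ p ∈ U, X (Fin.last n) (content p)) * schurGen n (C \ U) fun k => X k.castSucc := by
  rw [schurGen_eq, ← Finset.sum_fiberwise_of_maps_to (g := lastCells)
    (t := C.powerset.filter fun U => IsOuterStrip C U)]
  · refine Finset.sum_congr rfl fun U hU => ?_
    have hU := (Finset.mem_filter.1 hU).2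
    rw [schurGen_eq, Finset.mul_sum]
    symm
    refine Finset.sum_bij (fun T _ p => extendLast T p) ?_ ?_ ?_ ?_
    · intro T hT
      simp only [Finset.mem_filter, Finset.mem_univ, true_and] at hT ⊢
      exact ⟨isSemistandard_extendLast hU hT, lastCells_extendLast hU.1 T⟩
    · intro T _ T' _ h
      ext1 p
      have := congrFun h ⟨p, (Finset.mem_sdiff.1 p.2).1⟩
      rwa [extendLast_of_mem T p.2, extendLast_of_mem T' p.2, Fin.castSucc_inj] at this
    · intro T hT
      simp only [Finset.mem_filter, Finset.mem_univ, true_and] at hT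
      obtain ⟨hT, rfl⟩ := hT
      have hne : ∀ p : {p // p ∈ C \ lastCells T},
          T ⟨p, (Finset.mem_sdiff.1 p.2).1⟩ ≠ Fin.last n := fun p h =>
        (Finset.mem_sdiff.1 p.2).2 ((mem_lastCells T _).2 ⟨_, h⟩)
      refine ⟨fun p => (T ⟨p, (Finset.mem_sdiff.1 p.2).1⟩).castPred (hne p), ?_, ?_⟩
      · simp only [Finset.mem_filter, Finset.mem_univ, true_and]
        refine ⟨fun p q h => ?_, fun p q h => ?_⟩
        · rw [Fin.castPred_le_castPred_iff]
          exact hT.1 _ _ h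
        · rw [Fin.castPred_lt_castPred_iff]
          exact hT.2 _ _ h
      · ext1 p
        by_cases hp : (p : ℕ × ℕ) ∈ C \ lastCells T
        · rw [extendLast_of_mem _ hp, Fin.castSucc_castPred]
        · rw [extendLast_of_notMem _ hp]
          have : (p : ℕ × ℕ) ∈ lastCells T := by
            by_contra h
            exact hp (Finset.mem_sdiff.2 ⟨p.2, h⟩)
          exact ((mem_lastCells T _).1 this).2.symm
    · intro T _
      rw [prod_extendLast hU.1, mul_comm]
  · intro T hT
    have := (Finset.mem_filter.1 hT).2.isOuterStrip
    simp [this, this.1]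

theorem schurGen_empty {R : Type*} [CommRing R] (n : ℕ) (X : Fin n → ℤ → R) :
    schurGen n ∅ X = 1 := by
  have (T : {p : ℕ × ℕ // p ∈ (∅ : Finset (ℕ × ℕ))} → Fin n) : IsSemistandard T :=
    ⟨fun p => absurd p.2 (Finset.notMem_empty _), fun p => absurd p.2 (Finset.notMem_empty _)⟩
  simp [schurGen_eq, this]

theorem schurGen_zero_of_nonempty {R : Type*} [CommRing R] {C : Finset (ℕ × ℕ)}
    (hC : C.Nonempty) (X : Fin 0 → ℤ → R) : schurGen 0 C X = 0 := by
  obtain ⟨p, hp⟩ := hC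
  rw [schurGen_eq]
  exact Finset.sum_eq_zero fun T _ => (T ⟨p, hp⟩).elim0

theorem mem_colCells (r : ℕ) (p : ℕ × ℕ) : p ∈ colCells r ↔ p.1 < r ∧ p.2 = 0 := by
  simp only [colCells, Finset.mem_image, Finset.mem_range, Prod.ext_iff]
  constructor
  · rintro ⟨a, h, h1, h2⟩
    exact ⟨h1 ▸ h, h2.symm⟩
  · rintro ⟨h, h'⟩
    exact ⟨_, h, rfl, h'.symm⟩

theorem eGen_zero_left {R : Type*} [CommRing R] (r m : ℤ) (X : Fin 0 → ℤ → R) :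
    eGen 0 r m X = if r = 0 then 1 else 0 := by
  unfold eGen
  rcases lt_trichotomy r 0 with h | rfl | h
  · simp [h, h.ne]
  · simp [colCells, schurGen_empty]
  · rw [if_neg h.not_gt, if_neg h.ne']
    exact schurGen_zero_of_nonempty ⟨(0, 0), by simp [mem_colCells, h]⟩ _

theorem isOuterStrip_colCells (r : ℕ) (U : Finset (ℕ × ℕ)) :
    IsOuterStrip (colCells (r + 1)) U ↔ U = ∅ ∨ U = {(r, 0)} := by
  constructor
  · intro h
    have hU : U ⊆ {(r, 0)} := by
      rintro ⟨i, j⟩ hp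
      have h1 := (mem_colCells _ _).1 (h.1 hp)
      have h2 := h.2.2 i j hp
      simp only [mem_colCells, Finset.mem_singleton, Prod.mk.injEq] at h1 h2 ⊢
      omega
    exact Finset.subset_singleton_iff.1 hU
  · rintro (rfl | rfl)
    · exact ⟨by simp, by simp, by simp⟩
    · refine ⟨?_, ?_, ?_⟩ <;> simp [mem_colCells]

theorem eGen_succ {R : Type*} [CommRing R] (n : ℕ) (r m : ℤ) (X : Fin (n + 1) → ℤ → R) :
    eGen (n + 1) r m X = eGen n r m (fun k => X k.castSucc) +
      X (Fin.last n) (m - r + 1) * eGen n (r - 1) m (fun k => X k.castSucc) := by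
  unfold eGen
  rcases lt_trichotomy r 0 with h | rfl | h
  · simp [h, h.trans]
  · simp [colCells, schurGen_empty]
  · obtain ⟨s, rfl⟩ : ∃ s : ℕ, r = s + 1 := ⟨(r - 1).toNat, by omega⟩
    rw [if_neg (by omega), if_neg (by omega), if_neg (by omega)]
    have h1 : ((s : ℤ) + 1).toNat = s + 1 := by omega
    have h2 : ((s : ℤ) + 1 - 1).toNat = s := by omega
    have h3 : ((colCells (s + 1)).powerset.filter fun U => IsOuterStrip (colCells (s + 1)) U) =
        {∅, {(s, 0)}} := by
      ext U
      simp only [Finset.mem_filter, Finset.mem_powerset, Finset.mem_insert,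
        Finset.mem_singleton]
      rw [← isOuterStrip_colCells]
      exact ⟨fun h => h.2, fun h => ⟨h.1, h⟩⟩
    have h4 : colCells (s + 1) \ {(s, 0)} = colCells s := by
      ext ⟨i, j⟩
      simp only [mem_colCells, Finset.mem_sdiff, Finset.mem_singleton, Prod.mk.injEq]
      omega
    rw [h1, h2, schurGen_succ, h3, Finset.sum_pair (by simp)]
    simp only [Finset.prod_empty, one_mul, Finset.sdiff_empty, Finset.prod_singleton, h4, content]
    have h5 : m + (((0 : ℕ) : ℤ) - (s : ℤ)) = m - ((s : ℤ) + 1) + 1 := by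
      push_cast
      ring
    rw [h5]

/-- The cells `(i, j)` of a union of columns: column `j` occupies the rows `p j ≤ i < q j`. -/
def columnCells {N : ℕ} (p q : Fin N → ℤ) : Finset (ℕ × ℕ) :=
  Finset.univ.biUnion fun j : Fin N =>
    (Finset.Ico (p j).toNat (q j).toNat).image fun i => (i, (j : ℕ))

theorem mem_columnCells {N : ℕ} {p : Fin N → ℤ} (q : Fin N → ℤ) (i j : ℕ) :
    (i, j) ∈ columnCells p q ↔ ∃ h : j < N, p ⟨j, h⟩ ≤ i ∧ (i : ℤ) < q ⟨j, h⟩ := by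
  simp only [columnCells, Finset.mem_biUnion, Finset.mem_univ, true_and, Finset.mem_image,
    Finset.mem_Ico, Prod.mk.injEq]
  constructor
  · rintro ⟨j, i, h, rfl, rfl⟩
    exact ⟨j.2, by simp only [Fin.eta]; omega⟩
  · rintro ⟨h, h'⟩
    exact ⟨⟨j, h⟩, i, by omega, rfl, rfl⟩

/-- The dual Jacobi–Trudi determinant for the columns between `p` and `q`. -/
noncomputable def eDet {R : Type*} [CommRing R] {N : ℕ} (n : ℕ) (p q : Fin N → ℤ)
    (X : Fin n → ℤ → R) : R :=
  Matrix.det (Matrix.of fun i j : Fin N =>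
    eGen n (q i - p j - (i : ℕ) + (j : ℕ)) ((j : ℕ) - p j) X)

/-- Shorten by one cell each column in `S`. -/
noncomputable def shorten {N : ℕ} (q : Fin N → ℤ) (S : Finset (Fin N)) (j : Fin N) : ℤ :=
  if j ∈ S then q j - 1 else q j

theorem shorten_le {N : ℕ} (q : Fin N → ℤ) (S : Finset (Fin N)) : shorten q S ≤ q := by
  intro j
  change shorten q S j ≤ q j
  unfold shorten
  split_ifs <;> omega

theorem eDet_succ {R : Type*} [CommRing R] {N : ℕ} (n : ℕ) (p q : Fin N → ℤ)
    (X : Fin (n + 1) → ℤ → R) :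
    eDet (n + 1) p q X = ∑ S : Finset (Fin N), (∏ j ∈ S, X (Fin.last n) ((j : ℕ) - q j + 1)) *
      eDet n p (shorten q S) fun k => X k.castSucc := by
  set A : Fin N → Fin N → R := fun i j =>
    eGen n (q i - p j - (i : ℕ) + (j : ℕ)) ((j : ℕ) - p j) fun k => X k.castSucc with hA
  set B : Fin N → Fin N → R := fun i j => X (Fin.last n) ((i : ℕ) - q i + 1) *
    eGen n (q i - 1 - p j - (i : ℕ) + (j : ℕ)) ((j : ℕ) - p j) fun k => X k.castSucc with hB
  have h : eDet (n + 1) p q X = Matrix.detRowAlternating (B + A) := by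
    unfold eDet
    change Matrix.det _ = Matrix.det _
    congr 1
    ext i j
    simp only [Matrix.of_apply, Pi.add_apply, hA, hB, eGen_succ]
    rw [add_comm]
    congr 3
    · ring
    · ring
  rw [h]
  refine ((Matrix.detRowAlternating (R := R) (n := Fin N)).toMultilinearMap.map_add_univ B A).trans
    (Finset.sum_congr rfl fun S _ => ?_)
  change Matrix.det _ = _
  have h' : (∏ j ∈ S, X (Fin.last n) ((j : ℕ) - q j + 1)) =
      ∏ j, if j ∈ S then X (Fin.last n) ((j : ℕ) - q j + 1) else 1 := by
    simp
  rw [h', eDet, ← Matrix.det_mul_column]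
  congr 1
  ext i j
  by_cases hi : i ∈ S <;> simp [hi, hA, hB, shorten]

theorem Fin.antitone_of_succ_le {N : ℕ} {α : Type*} [Preorder α] {f : Fin N → α}
    (h : ∀ (k : ℕ) (hk : k + 1 < N), f ⟨k + 1, hk⟩ ≤ f ⟨k, by omega⟩) : Antitone f := by
  cases N with
  | zero => exact fun i => i.elim0
  | succ N => exact Fin.antitone_iff_succ_le.2 fun i => h i (by omega)

theorem eDet_shorten_eq_zero {R : Type*} [CommRing R] {N : ℕ} (n : ℕ) (p : Fin N → ℤ)
    {q : Fin N → ℤ} (hq : Antitone q) {S : Finset (Fin N)} (hS : ¬ Antitone (shorten q S))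
    (X : Fin n → ℤ → R) : eDet n p (shorten q S) X = 0 := by
  obtain ⟨k, hk, h⟩ : ∃ (k : ℕ) (hk : k + 1 < N),
      shorten q S ⟨k, by omega⟩ < shorten q S ⟨k + 1, hk⟩ := by
    by_contra! h
    exact hS (Fin.antitone_of_succ_le h)
  have h1 : q ⟨k + 1, hk⟩ ≤ q ⟨k, by omega⟩ := hq (by simp [Fin.le_def])
  have h2 : shorten q S ⟨k + 1, hk⟩ = shorten q S ⟨k, by omega⟩ + 1 := by
    unfold shorten at h ⊢
    split_ifs at h ⊢ <;> omega
  refine Matrix.det_zero_of_row_eq (i := ⟨k, by omega⟩) (j := ⟨k + 1, hk⟩) (by simp) ?_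
  ext j
  simp only [Matrix.of_apply, h2]
  congr 1
  push_cast
  ring

theorem eDet_zero {R : Type*} [CommRing R] {N : ℕ} {p q : Fin N → ℤ} (hp : Antitone p)
    (hq : Antitone q) (X : Fin 0 → ℤ → R) : eDet 0 p q X = if p = q then 1 else 0 := by
  have hanti {f : Fin N → ℤ} (hf : Antitone f) : StrictAnti fun i : Fin N => f i - (i : ℕ) := by
    intro i j hij
    have := hf hij.le
    have : (i : ℕ) < j := hij
    dsimp only
    omega
  have hM : (Matrix.of fun i j : Fin N =>
      eGen 0 (q i - p j - (i : ℕ) + (j : ℕ)) ((j : ℕ) - p j) X) =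
      Matrix.of fun i j : Fin N => if q i - (i : ℕ) = p j - (j : ℕ) then (1 : R) else 0 := by
    ext i j
    simp only [Matrix.of_apply, eGen_zero_left]
    refine if_congr ?_ rfl rfl
    omega
  rw [eDet, hM]
  split_ifs with h
  · subst h
    rw [← Matrix.det_one (n := Fin N)]
    congr 1
    ext i j
    simp [Matrix.one_apply, (hanti hp).injective.eq_iff (a := i) (b := j)]
  · rw [Matrix.det_apply]
    refine Finset.sum_eq_zero fun σ _ => ?_
    suffices hσ : ∃ j, q (σ j) - (σ j : ℕ) ≠ p j - (j : ℕ) by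
      obtain ⟨j, hj⟩ := hσ
      rw [Finset.prod_eq_zero (Finset.mem_univ j), smul_zero]
      simp [hj]
    by_contra! hσ
    have hmono : StrictMono σ := by
      intro i j hij
      have h1 := hanti hp hij
      dsimp only at h1
      rw [← hσ, ← hσ] at h1
      exact (hanti hq).lt_iff_gt.1 h1
    have hid : ∀ j, σ j = j := fun j => by
      have : (hmono.orderIsoOfSurjective σ σ.surjective) = OrderIso.refl (Fin N) :=
        Subsingleton.elim _ _
      exact DFunLike.congr_fun this j
    refine h (funext fun j => ?_)
    have := hσ j
    rw [hid] at this
    omega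

/-- The bottom cells of the columns in `S`. -/
noncomputable def bottomCells {N : ℕ} (q : Fin N → ℤ) (S : Finset (Fin N)) : Finset (ℕ × ℕ) :=
  S.image fun j => ((q j - 1).toNat, (j : ℕ))

theorem mem_bottomCells {N : ℕ} {p q : Fin N → ℤ} (hp : 0 ≤ p) {S : Finset (Fin N)}
    (hpS : p ≤ shorten q S) (i j : ℕ) :
    (i, j) ∈ bottomCells q S ↔ ∃ h : j < N, ⟨j, h⟩ ∈ S ∧ (i : ℤ) + 1 = q ⟨j, h⟩ := by
  have key (j : Fin N) (hj : j ∈ S) : 0 ≤ q j - 1 := by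
    have := hpS j
    rw [shorten, if_pos hj] at this
    exact (hp j).trans this
  simp only [bottomCells, Finset.mem_image, Prod.mk.injEq]
  constructor
  · rintro ⟨j, hj, rfl, rfl⟩
    have := key j hj
    exact ⟨j.2, hj, by simp only [Fin.eta]; omega⟩
  · rintro ⟨h, hj, h'⟩
    exact ⟨⟨j, h⟩, hj, by omega, rfl⟩

theorem bottomCells_subset {N : ℕ} {p q : Fin N → ℤ} (hp : 0 ≤ p) {S : Finset (Fin N)}
    (hpS : p ≤ shorten q S) : bottomCells q S ⊆ columnCells p q := by
  rintro ⟨i, j⟩ h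
  obtain ⟨hj, hjS, h⟩ := (mem_bottomCells hp hpS i j).1 h
  have : p ⟨j, hj⟩ ≤ shorten q S ⟨j, hj⟩ := hpS _
  rw [shorten, if_pos hjS] at this
  exact (mem_columnCells q i j).2 ⟨hj, by omega, by omega⟩

theorem columnCells_sdiff_bottomCells {N : ℕ} {p q : Fin N → ℤ} (hp : 0 ≤ p)
    {S : Finset (Fin N)} (hpS : p ≤ shorten q S) :
    columnCells p q \ bottomCells q S = columnCells p (shorten q S) := by
  ext ⟨i, j⟩
  rw [Finset.mem_sdiff, mem_columnCells, mem_bottomCells hp hpS, mem_columnCells]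
  by_cases h : j < N
  · simp only [h, exists_true_left]
    unfold shorten
    split_ifs with hS
    · simp only [hS, true_and]
      omega
    · simp [hS]
  · simp [h]

theorem isOuterStrip_bottomCells {N : ℕ} {p q : Fin N → ℤ} (hp : 0 ≤ p)
    {S : Finset (Fin N)} (hpS : p ≤ shorten q S) (hS : Antitone (shorten q S)) :
    IsOuterStrip (columnCells p q) (bottomCells q S) := by
  refine ⟨bottomCells_subset hp hpS, fun i j h h' => ?_, fun i j h h' => ?_⟩
  · rw [mem_bottomCells hp hpS] at h ⊢
    rw [mem_columnCells] at h'
    obtain ⟨hj, hjS, h⟩ := h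
    obtain ⟨hj', h1, h2⟩ := h'
    have h3 : shorten q S ⟨j + 1, hj'⟩ ≤ shorten q S ⟨j, hj⟩ := hS (by simp [Fin.le_def])
    rw [shorten, shorten, if_pos hjS] at h3
    by_cases hS' : ⟨j + 1, hj'⟩ ∈ S
    · rw [if_pos hS'] at h3
      exact ⟨hj', hS', by omega⟩
    · rw [if_neg hS'] at h3
      omega
  · rw [mem_bottomCells hp hpS] at h
    rw [mem_columnCells] at h'
    obtain ⟨hj, hjS, h⟩ := h
    obtain ⟨hj', h1, h2⟩ := h'
    push_cast at h2
    omega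

theorem IsOuterStrip.add_one_eq {N : ℕ} {p q : Fin N → ℤ} {U : Finset (ℕ × ℕ)}
    (hU : IsOuterStrip (columnCells p q) U) {i j : ℕ} (h : (i, j) ∈ U) :
    ∃ hj : j < N, p ⟨j, hj⟩ ≤ i ∧ (i : ℤ) + 1 = q ⟨j, hj⟩ := by
  obtain ⟨hj, h1, h2⟩ := (mem_columnCells q i j).1 (hU.1 h)
  have h3 := hU.2.2 i j h
  rw [mem_columnCells] at h3
  refine ⟨hj, h1, ?_⟩
  by_contra h4
  exact h3 ⟨hj, by push_cast; omega, by push_cast; omega⟩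

theorem IsOuterStrip.exists_bottomCells {N : ℕ} {p q : Fin N → ℤ} (hp : 0 ≤ p) (hpa : Antitone p)
    (hq : Antitone q) (hpq : p ≤ q) {U : Finset (ℕ × ℕ)}
    (hU : IsOuterStrip (columnCells p q) U) :
    ∃ S : Finset (Fin N), p ≤ shorten q S ∧ Antitone (shorten q S) ∧ bottomCells q S = U := by
  set S : Finset (Fin N) := Finset.univ.filter fun j => ∃ i : ℕ, (i, (j : ℕ)) ∈ U with hSdef
  have hS (j : Fin N) : j ∈ S ↔ ∃ i : ℕ, (i, (j : ℕ)) ∈ U := by simp [hSdef]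
  have hpS : p ≤ shorten q S := by
    intro j
    change p j ≤ shorten q S j
    unfold shorten
    split_ifs with h
    · obtain ⟨i, hi⟩ := (hS j).1 h
      obtain ⟨hj, h1, h2⟩ := hU.add_one_eq hi
      simp only [Fin.eta] at h1 h2
      omega
    · exact hpq j
  refine ⟨S, hpS, Fin.antitone_of_succ_le fun k hk => ?_, ?_⟩
  · have h1 : q ⟨k + 1, hk⟩ ≤ q ⟨k, by omega⟩ := hq (by simp [Fin.le_def])
    have h2 : p ⟨k + 1, hk⟩ ≤ p ⟨k, by omega⟩ := hpa (by simp [Fin.le_def])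
    have h3 : ⟨k, by omega⟩ ∈ S → q ⟨k + 1, hk⟩ = q ⟨k, by omega⟩ → ⟨k + 1, hk⟩ ∈ S := by
      intro h h'
      obtain ⟨i, hi⟩ := (hS _).1 h
      obtain ⟨hj, h4, h5⟩ := hU.add_one_eq hi
      dsimp only at hi h4 h5
      exact (hS _).2 ⟨i, hU.2.1 _ _ hi ((mem_columnCells q _ _).2 ⟨hk, by omega, by omega⟩)⟩
    unfold shorten
    split_ifs with h4 h5 h5
    · omega
    · omega
    · have := mt (h3 h5) h4
      omega
    · omega
  · ext ⟨i, j⟩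
    rw [mem_bottomCells hp hpS]
    constructor
    · rintro ⟨hj, h, h'⟩
      obtain ⟨i', hi'⟩ := (hS _).1 h
      obtain ⟨_, h1, h2⟩ := hU.add_one_eq hi'
      dsimp only at h2
      obtain rfl : i' = i := by omega
      exact hi'
    · intro h
      obtain ⟨hj, h1, h2⟩ := hU.add_one_eq h
      exact ⟨hj, (hS _).2 ⟨i, h⟩, h2⟩

theorem bottomCells_injective {N : ℕ} (q : Fin N → ℤ) : Function.Injective (bottomCells q) := by
  refine Finset.image_injective fun i j h => ?_
  exact Fin.ext (Prod.ext_iff.1 h).2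

theorem prod_bottomCells {R : Type*} [CommRing R] {N : ℕ} {p q : Fin N → ℤ} (hp : 0 ≤ p)
    {S : Finset (Fin N)} (hpS : p ≤ shorten q S) (x : ℤ → R) :
    ∏ c ∈ bottomCells q S, x (content c) = ∏ j ∈ S, x ((j : ℕ) - q j + 1) := by
  rw [bottomCells, Finset.prod_image fun i _ j _ h => Fin.ext (Prod.ext_iff.1 h).2]
  refine Finset.prod_congr rfl fun j hj => ?_
  have h1 : p j ≤ shorten q S j := hpS j
  have h2 : 0 ≤ p j := hp j
  rw [shorten, if_pos hj] at h1
  congr 1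
  simp only [content]
  omega

theorem schurGen_columnCells_succ {R : Type*} [CommRing R] {N : ℕ} (n : ℕ) {p q : Fin N → ℤ}
    (hp : 0 ≤ p) (hpa : Antitone p) (hq : Antitone q) (hpq : p ≤ q)
    (X : Fin (n + 1) → ℤ → R) :
    schurGen (n + 1) (columnCells p q) X =
      ∑ S : Finset (Fin N) with p ≤ shorten q S ∧ Antitone (shorten q S),
        (∏ j ∈ S, X (Fin.last n) ((j : ℕ) - q j + 1)) *
          schurGen n (columnCells p (shorten q S)) fun k => X k.castSucc := by
  rw [schurGen_succ]
  symm
  refine Finset.sum_bij (fun S _ => bottomCells q S) ?_ ?_ ?_ ?_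
  · intro S hS
    obtain ⟨hpS, hS⟩ := (Finset.mem_filter.1 hS).2
    exact Finset.mem_filter.2 ⟨Finset.mem_powerset.2 (bottomCells_subset hp hpS),
      isOuterStrip_bottomCells hp hpS hS⟩
  · exact fun S _ S' _ h => bottomCells_injective q h
  · intro U hU
    obtain ⟨S, h1, h2, h3⟩ :=
      (Finset.mem_filter.1 hU).2.exists_bottomCells hp hpa hq hpq
    exact ⟨S, Finset.mem_filter.2 ⟨Finset.mem_univ _, h1, h2⟩, h3⟩
  · intro S hS
    obtain ⟨hpS, hS⟩ := (Finset.mem_filter.1 hS).2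
    rw [prod_bottomCells hp hpS (X (Fin.last n)), columnCells_sdiff_bottomCells hp hpS]

theorem eDet_eq {R : Type*} [CommRing R] {N : ℕ} (n : ℕ) {p q : Fin N → ℤ}
    (hp : 0 ≤ p) (hpa : Antitone p) (hq : Antitone q) (X : Fin n → ℤ → R) :
    eDet n p q X = if p ≤ q then schurGen n (columnCells p q) X else 0 := by
  induction n generalizing q with
  | zero =>
    rw [eDet_zero hpa hq]
    by_cases h : p = q
    · subst h
      have : columnCells p p = ∅ := by
        refine Finset.eq_empty_of_forall_notMem ?_
        rintro ⟨i, j⟩ h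
        obtain ⟨_, h1, h2⟩ := (mem_columnCells p i j).1 h
        omega
      simp [this, schurGen_empty]
    · rw [if_neg h]
      split_ifs with hpq
      · obtain ⟨j, hj⟩ : ∃ j, p j < q j := by
          by_contra! h'
          exact h (le_antisymm hpq h')
        have h0 : 0 ≤ p j := hp j
        refine (schurGen_zero_of_nonempty ⟨((p j).toNat, (j : ℕ)), ?_⟩ X).symm
        exact (mem_columnCells q _ _).2 ⟨j.2, by simp only [Fin.eta]; omega⟩
      · rfl
  | succ n ih =>
    rw [eDet_succ]
    split_ifs with hpq
    · rw [schurGen_columnCells_succ n hp hpa hq hpq, Finset.sum_filter]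
      refine Finset.sum_congr rfl fun S _ => ?_
      by_cases hS : Antitone (shorten q S)
      · rw [ih hS]
        by_cases hpS : p ≤ shorten q S <;> simp [hS, hpS]
      · simp [hS, eDet_shorten_eq_zero n p hq hS]
    · refine Finset.sum_eq_zero fun S _ => ?_
      by_cases hS : Antitone (shorten q S)
      · rw [ih hS, if_neg fun h => hpq (h.trans (shorten_le q S)), mul_zero]
      · rw [eDet_shorten_eq_zero n p hq hS, mul_zero]

theorem lt_conjPart_iff {f : ℕ → ℕ} (hf : Antitone f) (l i j : ℕ) :
    i < conjPart f l j ↔ i < l ∧ j < f i := by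
  set s := (Finset.range l).filter fun i => j < f i with hs
  have hmem (a : ℕ) : a ∈ s ↔ a < l ∧ j < f a := by simp [hs]
  have hlower {a b : ℕ} (hab : a ≤ b) (hb : b ∈ s) : a ∈ s := by
    rw [hmem] at hb ⊢
    exact ⟨hab.trans_lt hb.1, hb.2.trans_le (hf hab)⟩
  rw [← hmem]
  change i < s.card ↔ i ∈ s
  constructor
  · intro h
    by_contra hi
    have : s ⊆ Finset.range i := fun a ha =>
      Finset.mem_range.2 (lt_of_not_ge fun h' => hi (hlower h' ha))
    have := Finset.card_le_card this
    rw [Finset.card_range] at this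
    omega
  · intro h
    have : Finset.range (i + 1) ⊆ s := fun a ha =>
      hlower (Nat.lt_succ_iff.1 (Finset.mem_range.1 ha)) h
    simpa using Finset.card_le_card this

theorem antitone_conjPart (f : ℕ → ℕ) (l : ℕ) : Antitone (conjPart f l) := by
  intro a b hab
  refine Finset.card_le_card fun i hi => ?_
  simp only [Finset.mem_filter] at hi ⊢
  exact ⟨hi.1, hab.trans_lt hi.2⟩

theorem conjPart_mono {f g : ℕ → ℕ} (h : ∀ i, f i ≤ g i) (l j : ℕ) :
    conjPart f l j ≤ conjPart g l j := by
  refine Finset.card_le_card fun i hi => ?_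
  simp only [Finset.mem_filter] at hi ⊢
  exact ⟨hi.1, hi.2.trans_le (h i)⟩

theorem skewCells_eq_columnCells {lam mu : ℕ → ℕ} (hlam : Antitone lam) (hmu : Antitone mu)
    (l : ℕ) :
    skewCells lam mu l = columnCells (fun j : Fin (lam 0) => (conjPart mu l j : ℤ))
      fun j : Fin (lam 0) => (conjPart lam l j : ℤ) := by
  ext ⟨i, j⟩
  have h1 := lt_conjPart_iff hlam l i j
  have h2 := lt_conjPart_iff hmu l i j
  rw [mem_columnCells]
  simp only [skewCells, Finset.mem_filter, Finset.mem_product, Finset.mem_range, exists_prop,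
    Nat.cast_le, Nat.cast_lt]
  rw [h1, ← not_lt, ← not_lt, h2]
  tauto

/-- **Dual Jacobi–Trudi type identity for ninth variation skew Schur functions.**
For partitions `μ ⊆ λ`,
`s_{λ/μ}(X) = det( e_{λ'_i - μ'_j - i + j}(τ^{-μ'_j + j - 1} X) )_{1 ≤ i,j ≤ l'}`
with `l' = λ_1` (stated with 0-indexed columns, so the shift exponent
`-μ'_j + j - 1` becomes `j - μ'_j` for `j : Fin l'`). -/
theorem dualJacobiTrudi_ninthVariation {R : Type*} [CommRing R] (n l : ℕ) (lam mu : ℕ → ℕ)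
    (hlam : Antitone lam) (hmu : Antitone mu) (hsub : ∀ i, mu i ≤ lam i)
    (hlen : ∀ i, l ≤ i → lam i = 0) (X : Fin n → ℤ → R) :
    schurGen n (skewCells lam mu l) X =
      Matrix.det (Matrix.of fun i j : Fin (lam 0) =>
        eGen n ((conjPart lam l (i : ℕ) : ℤ) - (conjPart mu l (j : ℕ) : ℤ) - (i : ℕ) + (j : ℕ))
          ((j : ℕ) - (conjPart mu l (j : ℕ) : ℤ)) X) := by
  have hanti (f : ℕ → ℕ) : Antitone fun j : Fin (lam 0) => (conjPart f l j : ℤ) :=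
    fun a b hab => Nat.cast_le.2 (antitone_conjPart f l hab)
  have hle : (fun j : Fin (lam 0) => (conjPart mu l j : ℤ)) ≤
      fun j : Fin (lam 0) => (conjPart lam l j : ℤ) :=
    fun j => Nat.cast_le.2 (conjPart_mono hsub l j)
  have h := eDet_eq n (fun j => Int.natCast_nonneg _) (hanti mu) (hanti lam) X
  rw [if_pos hle, ← skewCells_eq_columnCells hlam hmu l] at h
  exact h.symm
end

section
/- For a strict partition λ of length p and X = (x_{k,c}), Y = (y_{k,c}), the generalized Q-function satisfies the row-based Pfaffian (Schur-type) identity: Q_λ(X, Y) = Pf( Q_{(λ_i, λ_j)}(X, Y) )_{1 ≤ i,j ≤ l}, where l = p if p is even and l = p+1 if p is odd (with λ_{p+1} = 0 and Q_{(λ_i, 0)}(X,Y) = Q_{(λ_i)}(X,Y)), and where for i < j the entry is the generalized skew Q-function of the two-row shifted shape (λ_i, λ_j), with the matrix extended antisymmetrically: Q_{(λ_j,λ_i)}(X,Y) := −Q_{(λ_i,λ_j)}(X,Y) for i < j and Q_{(λ_i,λ_i)}(X,Y) := 0. -/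
open Finset
open scoped Classical

/-- Boxes of the shifted skew diagram of strict partitions `lam/mu` (0-indexed):
row `i < l` occupies columns `i + mu i ≤ j < i + lam i`. -/
def shiftedCells (lam mu : ℕ → ℕ) (l : ℕ) : Finset (ℕ × ℕ) :=
  (Finset.range l ×ˢ Finset.range (l + lam 0)).filter fun p =>
    p.1 + mu p.1 ≤ p.2 ∧ p.2 < p.1 + lam p.1

/-- A primed-alphabet entry: `(k, true)` stands for the primed entry `(k+1)'` and
`(k, false)` for the unprimed entry `k+1`.  `ordE` realizes the total order
`1' < 1 < 2' < 2 < ⋯ < n' < n`. -/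
def ordE {n : ℕ} (e : Fin n × Bool) : ℕ := 2 * (e.1 : ℕ) + (if e.2 then 0 else 1)

/-- The ninth variation (generalized) skew Q-function: sum over primed shifted
tableaux on the cell set `C` (entries weakly increasing along rows and columns,
no repeated primed entry in a row, no repeated unprimed entry in a column),
weighting an unprimed entry `k` in a box of content `c` by `X k c` and a primed
entry `k'` by `Y k c`. -/
noncomputable def QGen {R : Type*} [CommRing R] (n : ℕ) (C : Finset (ℕ × ℕ))
    (X Y : Fin n → ℤ → R) : R :=
  ∑ T ∈ Finset.univ.filter (fun T : {p // p ∈ C} → Fin n × Bool =>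
      (∀ p q : {p // p ∈ C}, (q : ℕ × ℕ).1 = (p : ℕ × ℕ).1 ∧
          (q : ℕ × ℕ).2 = (p : ℕ × ℕ).2 + 1 →
          ordE (T p) ≤ ordE (T q) ∧ ¬(T p = T q ∧ (T p).2 = true)) ∧
      (∀ p q : {p // p ∈ C}, (q : ℕ × ℕ).1 = (p : ℕ × ℕ).1 + 1 ∧
          (q : ℕ × ℕ).2 = (p : ℕ × ℕ).2 →
          ordE (T p) ≤ ordE (T q) ∧ ¬(T p = T q ∧ (T p).2 = false))),
    ∏ p : {p // p ∈ C},
      (if (T p).2 then Y (T p).1 (content (p : ℕ × ℕ)) else X (T p).1 (content (p : ℕ × ℕ)))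

/-- The Pfaffian of a `2m × 2m` matrix, as the sum over perfect matchings
(encoded as permutations `σ` in canonical form) of the sign of `σ` times the
product of the matched entries. -/
noncomputable def pfaffian {R : Type*} [CommRing R] {m : ℕ}
    (A : Matrix (Fin (2 * m)) (Fin (2 * m)) R) : R :=
  ∑ σ ∈ Finset.univ.filter (fun σ : Equiv.Perm (Fin (2 * m)) =>
      (∀ i : Fin m, σ ⟨2 * (i : ℕ), by have := i.isLt; omega⟩ <
          σ ⟨2 * (i : ℕ) + 1, by have := i.isLt; omega⟩) ∧
      (∀ i j : Fin m, i < j → σ ⟨2 * (i : ℕ), by have := i.isLt; omega⟩ <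
          σ ⟨2 * (j : ℕ), by have := j.isLt; omega⟩)),
    (Equiv.Perm.sign σ : ℤ) •
      ∏ i : Fin m, A (σ ⟨2 * (i : ℕ), by have := i.isLt; omega⟩)
        (σ ⟨2 * (i : ℕ) + 1, by have := i.isLt; omega⟩)

/-- The generalized skew Q-function of the two-row shifted shape `(a, b)`
(for `b = 0`, the one-row shape `(a)`). -/
noncomputable def qTwoRow {R : Type*} [CommRing R] (n a b : ℕ) (X Y : Fin n → ℤ → R) : R :=
  QGen n (shiftedCells (fun i => if i = 0 then a else if i = 1 then b else 0) (fun _ => 0) 2) X Y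

/-- The canonical permutations encoding the perfect matchings of `Fin (2 * m)`. -/
def IsMatchingPerm {m : ℕ} (σ : Equiv.Perm (Fin (2 * m))) : Prop :=
  (∀ i : Fin m, σ ⟨2 * (i : ℕ), by have := i.isLt; omega⟩ <
      σ ⟨2 * (i : ℕ) + 1, by have := i.isLt; omega⟩) ∧
    (∀ i j : Fin m, i < j → σ ⟨2 * (i : ℕ), by have := i.isLt; omega⟩ <
      σ ⟨2 * (j : ℕ), by have := j.isLt; omega⟩)

/-- The permutation of `Fin (n + 2)` fixing `0`, sending `1` to `j + 1`, and acting on the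
remaining points as `τ`. -/
def matchZero {n : ℕ} (j : Fin (n + 1)) (τ : Equiv.Perm (Fin n)) : Equiv.Perm (Fin (n + 2)) :=
  Equiv.Perm.decomposeFin.symm (0, j.cycleRange.symm * Equiv.Perm.decomposeFin.symm (0, τ))

theorem matchZero_zero {n : ℕ} (j : Fin (n + 1)) (τ : Equiv.Perm (Fin n)) :
    matchZero j τ 0 = 0 := by
  simp [matchZero]

theorem matchZero_one {n : ℕ} (j : Fin (n + 1)) (τ : Equiv.Perm (Fin n)) :
    matchZero j τ 1 = j.succ := by
  simp [matchZero]

theorem matchZero_succ_succ {n : ℕ} (j : Fin (n + 1)) (τ : Equiv.Perm (Fin n)) (i : Fin n) :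
    matchZero j τ i.succ.succ = (j.succAbove (τ i)).succ := by
  simp [matchZero]

theorem sign_matchZero {n : ℕ} (j : Fin (n + 1)) (τ : Equiv.Perm (Fin n)) :
    Equiv.Perm.sign (matchZero j τ) = (-1) ^ (j : ℕ) * Equiv.Perm.sign τ := by
  simp [matchZero, ← Equiv.Perm.inv_def, Equiv.Perm.sign_inv, Fin.sign_cycleRange]

theorem exists_matchZero {n : ℕ} (σ : Equiv.Perm (Fin (n + 2))) (h : σ 0 = 0) :
    ∃ j τ, matchZero j τ = σ := by
  obtain ⟨⟨a, ρ⟩, rfl⟩ := Equiv.Perm.decomposeFin.symm.surjective σ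
  obtain rfl : a = 0 := by simpa using h
  obtain ⟨⟨b, τ⟩, hb⟩ := Equiv.Perm.decomposeFin.symm.surjective ((ρ 0).cycleRange * ρ)
  obtain rfl : b = 0 := by simpa using congrArg (fun e : Equiv.Perm _ => e 0) hb
  refine ⟨ρ 0, τ, ?_⟩
  rw [matchZero, hb, ← Equiv.Perm.inv_def, inv_mul_cancel_left]

theorem matchZero_injective {n : ℕ} {j j' : Fin (n + 1)} {τ τ' : Equiv.Perm (Fin n)}
    (h : matchZero j τ = matchZero j' τ') : j = j' ∧ τ = τ' := by
  have hj : j = j' := Fin.succ_injective _ (by rw [← matchZero_one j τ, h, matchZero_one])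
  subst hj
  refine ⟨rfl, Equiv.ext fun i => ?_⟩
  have := congrArg (fun e : Equiv.Perm _ => e i.succ.succ) h
  simpa [matchZero_succ_succ] using this

theorem IsMatchingPerm.apply_zero {m : ℕ} {σ : Equiv.Perm (Fin (2 * (m + 1)))}
    (h : IsMatchingPerm σ) : σ (0 : Fin (2 * m + 1 + 1)) = (0 : Fin (2 * m + 1 + 1)) := by
  obtain ⟨q, hq⟩ := σ.surjective (0 : Fin (2 * m + 1 + 1))
  have hq2 : (q : ℕ) < 2 * (m + 1) := q.isLt
  obtain ⟨i, hi | hi⟩ := Nat.even_or_odd' (q : ℕ)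
  · rcases Nat.eq_zero_or_pos i with rfl | hpos
    · have : q = (0 : Fin (2 * m + 1 + 1)) := Fin.ext (by simpa using hi)
      rw [← this]; exact hq.trans this.symm
    · have := h.2 ⟨0, by omega⟩ ⟨i, by omega⟩ hpos
      have e : (⟨2 * i, by omega⟩ : Fin (2 * (m + 1))) = q := Fin.ext hi.symm
      simp only [e, hq] at this
      exact absurd this (Fin.not_lt_zero _)
  · have := h.1 ⟨i, by omega⟩
    have e : (⟨2 * i + 1, by omega⟩ : Fin (2 * (m + 1))) = q := Fin.ext hi.symm
    simp only [e, hq] at this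
    exact absurd this (Fin.not_lt_zero _)

theorem isMatchingPerm_matchZero {m : ℕ} (j : Fin (2 * m + 1)) (τ : Equiv.Perm (Fin (2 * m))) :
    IsMatchingPerm (m := m + 1) (matchZero j τ) ↔ IsMatchingPerm τ := by
  have hs (q : ℕ) (hq : q < 2 * m) (hq' : q + 2 < 2 * (m + 1)) :
      matchZero j τ ⟨q + 2, hq'⟩ = (j.succAbove (τ ⟨q, hq⟩)).succ :=
    matchZero_succ_succ j τ ⟨q, hq⟩
  constructor
  · rintro ⟨ha, hb⟩
    refine ⟨fun i => ?_, fun i k hik => ?_⟩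
    · have := ha i.succ
      rw [← Fin.succAbove_lt_succAbove_iff (p := j), ← Fin.succ_lt_succ_iff, ← hs _ _ (by omega),
        ← hs _ _ (by omega)]
      exact this
    · have := hb i.succ k.succ (Fin.succ_lt_succ_iff.2 hik)
      rw [← Fin.succAbove_lt_succAbove_iff (p := j), ← Fin.succ_lt_succ_iff, ← hs _ _ (by omega),
        ← hs _ _ (by omega)]
      exact this
  · rintro ⟨ha, hb⟩
    refine ⟨fun i => ?_, fun i k hik => ?_⟩
    · induction i using Fin.cases with
      | zero =>
        exact lt_of_eq_of_lt (matchZero_zero j τ)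
          (lt_of_lt_of_eq (Fin.succ_pos j) (matchZero_one j τ).symm)
      | succ i =>
        have := ha i
        rw [← Fin.succAbove_lt_succAbove_iff (p := j), ← Fin.succ_lt_succ_iff, ← hs _ _ (by omega),
          ← hs _ _ (by omega)] at this
        exact this
    · induction k using Fin.cases with
      | zero => exact absurd hik (Fin.not_lt_zero _)
      | succ k =>
        induction i using Fin.cases with
        | zero =>
          exact lt_of_eq_of_lt (matchZero_zero j τ)
            (lt_of_lt_of_eq (Fin.succ_pos _) (hs (2 * k) (by omega) (by omega)).symm)
        | succ i =>
          have := hb i k (Fin.succ_lt_succ_iff.1 hik)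
          rw [← Fin.succAbove_lt_succAbove_iff (p := j), ← Fin.succ_lt_succ_iff,
            ← hs _ _ (by omega), ← hs _ _ (by omega)] at this
          exact this

theorem pfaffian_eq_sum {R : Type*} [CommRing R] {m : ℕ}
    (A : Matrix (Fin (2 * m)) (Fin (2 * m)) R) :
    pfaffian A = ∑ σ : Equiv.Perm (Fin (2 * m)) with IsMatchingPerm σ,
      (Equiv.Perm.sign σ : ℤ) •
        ∏ i : Fin m, A (σ ⟨2 * (i : ℕ), by have := i.isLt; omega⟩)
          (σ ⟨2 * (i : ℕ) + 1, by have := i.isLt; omega⟩) := by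
  unfold pfaffian IsMatchingPerm
  congr!

theorem pfaffian_zero {R : Type*} [CommRing R] (A : Matrix (Fin (2 * 0)) (Fin (2 * 0)) R) :
    pfaffian A = 1 := by
  rw [pfaffian_eq_sum, Finset.sum_eq_single 1]
  · simp
  · exact fun b _ hb => absurd (Subsingleton.elim (α := Equiv.Perm (Fin 0)) b 1) hb
  · intro h
    exact absurd (by simp [IsMatchingPerm]) h

/-- Expansion of the Pfaffian along the first row. -/
theorem pfaffian_succ {R : Type*} [CommRing R] {m : ℕ}
    (A : Matrix (Fin (2 * (m + 1))) (Fin (2 * (m + 1))) R) :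
    pfaffian A = ∑ j : Fin (2 * m + 1),
      (-1) ^ (j : ℕ) * (A (0 : Fin (2 * m + 1 + 1)) j.succ *
        pfaffian (A.submatrix (fun i : Fin (2 * m) => (j.succAbove i).succ)
          (fun i : Fin (2 * m) => (j.succAbove i).succ))) := by
  simp only [pfaffian_eq_sum, Finset.mul_sum]
  rw [← Finset.sum_product']
  symm
  refine Finset.sum_bij (fun a _ => matchZero a.1 a.2) ?_ ?_ ?_ ?_
  · rintro ⟨j, τ⟩ h
    simp only [Finset.mem_product, Finset.mem_filter, Finset.mem_univ, true_and] at h ⊢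
    exact (isMatchingPerm_matchZero j τ).2 h
  · rintro ⟨j, τ⟩ _ ⟨j', τ'⟩ _ h
    obtain ⟨rfl, rfl⟩ := matchZero_injective h
    rfl
  · intro σ hσ
    simp only [Finset.mem_filter, Finset.mem_univ, true_and] at hσ
    obtain ⟨j, τ, rfl⟩ := exists_matchZero σ hσ.apply_zero
    exact ⟨(j, τ), by simpa using (isMatchingPerm_matchZero j τ).1 hσ, rfl⟩
  · rintro ⟨j, τ⟩ _
    have hp : ∏ i : Fin (m + 1), A (matchZero j τ ⟨2 * (i : ℕ), by have := i.isLt; omega⟩)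
          (matchZero j τ ⟨2 * (i : ℕ) + 1, by have := i.isLt; omega⟩) =
        A (0 : Fin (2 * m + 1 + 1)) j.succ *
          ∏ i : Fin m, A (j.succAbove (τ ⟨2 * (i : ℕ), by have := i.isLt; omega⟩)).succ
            (j.succAbove (τ ⟨2 * (i : ℕ) + 1, by have := i.isLt; omega⟩)).succ := by
      rw [Fin.prod_univ_succ]
      congr 1
      · exact congrArg₂ A (matchZero_zero j τ) (matchZero_one j τ)
      · refine Finset.prod_congr rfl fun i _ => ?_
        exact congrArg₂ A (matchZero_succ_succ j τ ⟨2 * (i : ℕ), by have := i.isLt; omega⟩)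
          (matchZero_succ_succ j τ ⟨2 * (i : ℕ) + 1, by have := i.isLt; omega⟩)
    simp only [Matrix.submatrix_apply]
    rw [hp]
    have hsign := sign_matchZero j τ
    rw [hsign]
    simp only [zsmul_eq_mul, Units.val_mul, Units.val_pow_eq_pow_val, Units.val_neg, Units.val_one,
      Int.cast_mul, Int.cast_pow, Int.cast_neg, Int.cast_one]
    ring

section Wick

variable {R V : Type*} [CommRing R] [AddCommGroup V] [Module R V]

/-- The vacuum expectation on the exterior algebra determined by an alternating form `B`. -/
noncomputable def vacuum (B : LinearMap.BilinForm R V) (hB : B.IsAlt) :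
    ExteriorAlgebra R V →ₗ[R] R :=
  ExteriorAlgebra.algebraMapInv.toLinearMap ∘ₗ
    CliffordAlgebra.changeForm (Q := 0) (Q' := 0) (B := -B)
      (by ext v; simp [hB.self_eq_zero v])

variable (B : LinearMap.BilinForm R V) (hB : B.IsAlt)

theorem vacuum_one : vacuum B hB 1 = 1 := by
  have : CliffordAlgebra.changeForm (Q := 0) (Q' := 0) (B := -B)
      (by ext v; simp [hB.self_eq_zero v]) 1 = 1 := CliffordAlgebra.changeForm_one _
  rw [vacuum, LinearMap.comp_apply, this]
  exact map_one (ExteriorAlgebra.algebraMapInv (R := R) (M := V))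

theorem vacuum_ι_mul (v : V) (x : ExteriorAlgebra R V) :
    vacuum B hB (ExteriorAlgebra.ι R v * x) =
      vacuum B hB (CliffordAlgebra.contractLeft (B v) x) := by
  have := CliffordAlgebra.changeForm_ι_mul (Q := 0) (Q' := 0) (B := -B)
      (by ext v; simp [hB.self_eq_zero v]) v x
  rw [vacuum, LinearMap.comp_apply, LinearMap.comp_apply, CliffordAlgebra.changeForm_contractLeft]
  erw [this]
  simp [ExteriorAlgebra.algebraMapInv]

theorem contractLeft_ιMulti (d : Module.Dual R V) {n : ℕ} (v : Fin (n + 1) → V) :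
    CliffordAlgebra.contractLeft (Q := (0 : QuadraticForm R V)) d
        (ExteriorAlgebra.ιMulti R (n + 1) v) =
      ∑ j : Fin (n + 1), (-1 : R) ^ (j : ℕ) • d (v j) •
        ExteriorAlgebra.ιMulti R n (fun i => v (j.succAbove i)) := by
  induction n with
  | zero =>
    rw [ExteriorAlgebra.ιMulti_succ_apply, ExteriorAlgebra.ιMulti_zero_apply, mul_one]
    erw [CliffordAlgebra.contractLeft_ι]
    simp [Algebra.algebraMap_eq_smul_one]
  | succ n ih =>
    rw [ExteriorAlgebra.ιMulti_succ_apply]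
    erw [CliffordAlgebra.contractLeft_ι_mul]
    rw [ih]
    conv_rhs => rw [Fin.sum_univ_succ]
    rw [Finset.mul_sum, sub_eq_add_neg, ← Finset.sum_neg_distrib]
    congr 1
    · simp [Matrix.vecTail, Function.comp_def]
    · refine Finset.sum_congr rfl fun j _ => ?_
      rw [ExteriorAlgebra.ιMulti_succ_apply (fun i => v (j.succ.succAbove i))]
      simp [Matrix.vecTail, Function.comp_def, pow_succ]

/-- The Pfaffian `Pf (B (v i) (v j))` as an alternating multilinear function of the vectors. -/
noncomputable def wick (k : ℕ) : V [⋀^Fin k]→ₗ[R] R :=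
  (vacuum B hB).compAlternatingMap (ExteriorAlgebra.ιMulti R k)

theorem wick_apply {k : ℕ} (v : Fin k → V) :
    wick B hB k v = vacuum B hB (ExteriorAlgebra.ιMulti R k v) := rfl

theorem wick_zero (v : Fin 0 → V) : wick B hB 0 v = 1 := by
  rw [wick_apply, ExteriorAlgebra.ιMulti_zero_apply, vacuum_one]

theorem wick_succ_succ {k : ℕ} (v : Fin (k + 2) → V) :
    wick B hB (k + 2) v = ∑ j : Fin (k + 1), (-1 : R) ^ (j : ℕ) * (B (v 0) (v j.succ) *
      wick B hB k (fun i => v (j.succAbove i).succ)) := by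
  rw [wick_apply, ExteriorAlgebra.ιMulti_succ_apply, vacuum_ι_mul, contractLeft_ιMulti, map_sum]
  simp [wick_apply, Matrix.vecTail]

theorem wick_eq_pfaffian {m : ℕ} (v : Fin (2 * m) → V) :
    wick B hB (2 * m) v = pfaffian (Matrix.of fun i j => B (v i) (v j)) := by
  induction m with
  | zero => rw [pfaffian_zero, wick_zero]
  | succ m ih =>
    rw [pfaffian_succ]
    refine (wick_succ_succ B hB (k := 2 * m) v).trans (Finset.sum_congr rfl fun j _ => ?_)
    rw [ih]
    rfl

/-- A trailing hyperbolic pair `x, y` whose members pair equally with all other vectors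
can be dropped. -/
theorem wick_hyperbolic {k : ℕ} (v : Fin (k + 2) → V)
    (hxy : B (v (Fin.last k).castSucc) (v (Fin.last (k + 1))) = 1)
    (h : ∀ i : Fin k, B (v i.castSucc.castSucc) (v (Fin.last k).castSucc) =
      B (v i.castSucc.castSucc) (v (Fin.last (k + 1)))) :
    wick B hB (k + 2) v = wick B hB k (fun i => v i.castSucc.castSucc) := by
  set x := v (Fin.last k).castSucc with hx
  set y := v (Fin.last (k + 1)) with hy
  set w : Fin k → V := fun i => v i.castSucc.castSucc with hw
  have hsplit : ExteriorAlgebra.ιMulti R (k + 2) v =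
      ExteriorAlgebra.ιMulti R k w * (ExteriorAlgebra.ι R x * ExteriorAlgebra.ι R y) := by
    simp only [ExteriorAlgebra.ιMulti_apply, List.ofFn_succ', List.concat_eq_append,
      List.prod_append, List.prod_singleton, mul_assoc, hx, hy, hw]
  have hanti (a b : V) : ExteriorAlgebra.ι R a * ExteriorAlgebra.ι R b =
      -(ExteriorAlgebra.ι R b * ExteriorAlgebra.ι R a) :=
    eq_neg_of_add_eq_zero_left (ExteriorAlgebra.ι_add_mul_swap a b)
  have hcomm : Commute (ExteriorAlgebra.ιMulti R k w)
      (ExteriorAlgebra.ι R x * ExteriorAlgebra.ι R y) := by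
    rw [ExteriorAlgebra.ιMulti_apply]
    refine Commute.list_prod_left _ _ fun a ha => ?_
    obtain ⟨i, rfl⟩ := List.mem_ofFn.1 ha
    rw [commute_iff_eq, ← mul_assoc, hanti (w i) x, neg_mul, mul_assoc, hanti (w i) y, mul_neg,
      neg_neg, mul_assoc]
  have hcontr : CliffordAlgebra.contractLeft (Q := (0 : QuadraticForm R V)) (B (y - x))
      (ExteriorAlgebra.ιMulti R k w) = 0 := by
    cases k with
    | zero =>
      rw [ExteriorAlgebra.ιMulti_zero_apply]
      exact CliffordAlgebra.contractLeft_one (Q := (0 : QuadraticForm R V)) (d := B (y - x))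
    | succ k =>
      rw [contractLeft_ιMulti]
      refine Finset.sum_eq_zero fun j _ => ?_
      have : B (y - x) (w j) = 0 := by
        rw [← hB.neg_eq (w j) (y - x), map_sub, sub_eq_zero.2 (h j).symm, neg_zero]
      rw [this, zero_smul, smul_zero]
  have hval : B (y - x) x = -1 := by
    rw [map_sub, LinearMap.sub_apply, hB.self_eq_zero, sub_zero, ← hB.neg_eq x y, hxy]
  have hpair : ExteriorAlgebra.ι R x * ExteriorAlgebra.ι R y =
      -(ExteriorAlgebra.ι R (y - x) * ExteriorAlgebra.ι R x) := by
    rw [← hanti, map_sub, mul_sub, ExteriorAlgebra.ι_sq_zero, sub_zero]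
  rw [wick_apply, hsplit, hcomm.eq, hpair, neg_mul, map_neg, mul_assoc, vacuum_ι_mul]
  erw [CliffordAlgebra.contractLeft_ι_mul]
  rw [hcontr, hval, mul_zero, sub_zero, map_smul, neg_smul, one_smul, neg_neg, wick_apply]

end Wick

/-- The condition that filling the boxes of `C` outside `D` with a single letter, larger than the
letters of `D` and primed if `pr` holds, is compatible with the tableau conditions. -/
def IsStrip (pr : Prop) (C D : Finset (ℕ × ℕ)) : Prop :=
  (∀ p ∈ C, ∀ q ∈ C, q.1 = p.1 ∧ q.2 = p.2 + 1 → (q ∈ D → p ∈ D) ∧ ¬(p ∉ D ∧ q ∉ D ∧ pr)) ∧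
    (∀ p ∈ C, ∀ q ∈ C, q.1 = p.1 + 1 ∧ q.2 = p.2 → (q ∈ D → p ∈ D) ∧ ¬(p ∉ D ∧ q ∉ D ∧ ¬pr))

/-- The tableau conditions for letters in `ℕ`, where `prim t` says that the letter `t` is
primed. -/
def IsTab (prim : ℕ → Prop) {C : Finset (ℕ × ℕ)} (f : {p // p ∈ C} → ℕ) : Prop :=
  (∀ p q : {p // p ∈ C}, (q : ℕ × ℕ).1 = (p : ℕ × ℕ).1 ∧ (q : ℕ × ℕ).2 = (p : ℕ × ℕ).2 + 1 →
      f p ≤ f q ∧ ¬(f p = f q ∧ prim (f p))) ∧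
    (∀ p q : {p // p ∈ C}, (q : ℕ × ℕ).1 = (p : ℕ × ℕ).1 + 1 ∧ (q : ℕ × ℕ).2 = (p : ℕ × ℕ).2 →
      f p ≤ f q ∧ ¬(f p = f q ∧ ¬prim (f p)))

/-- The weighted sum over tableaux on `C` with letters `0, …, N - 1`. -/
noncomputable def tabSum {R : Type*} [CommRing R] (prim : ℕ → Prop) (z : ℕ → ℤ → R) (N : ℕ)
    (C : Finset (ℕ × ℕ)) : R :=
  ∑ f : {p // p ∈ C} → Fin N with IsTab prim (fun c => (f c : ℕ)),
    ∏ c : {p // p ∈ C}, z (f c) (content c)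

section Branching

variable {R : Type*} [CommRing R] (prim : ℕ → Prop) (z : ℕ → ℤ → R)

theorem tabSum_zero (C : Finset (ℕ × ℕ)) : tabSum prim z 0 C = if C = ∅ then 1 else 0 := by
  split_ifs with h
  · subst h
    simp [tabSum, IsTab]
  · obtain ⟨c, hc⟩ := Finset.nonempty_of_ne_empty h
    exact Finset.sum_eq_zero fun f _ => (f ⟨c, hc⟩).elim0

/-- Extend a filling of `D` to `C` by placing the new largest letter in the remaining boxes. -/
def extendFilling {N : ℕ} {C D : Finset (ℕ × ℕ)} (g : {p // p ∈ D} → Fin N) :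
    {p // p ∈ C} → Fin (N + 1) :=
  fun c => if h : (c : ℕ × ℕ) ∈ D then (g ⟨c, h⟩).castSucc else Fin.last N

theorem extendFilling_of_mem {N : ℕ} {C D : Finset (ℕ × ℕ)} (g : {p // p ∈ D} → Fin N)
    (c : {p // p ∈ C}) (h : (c : ℕ × ℕ) ∈ D) :
    extendFilling g c = (g ⟨c, h⟩).castSucc := dif_pos h

theorem extendFilling_of_notMem {N : ℕ} {C D : Finset (ℕ × ℕ)} (g : {p // p ∈ D} → Fin N)
    (c : {p // p ∈ C}) (h : (c : ℕ × ℕ) ∉ D) :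
    extendFilling g c = Fin.last N := dif_neg h

/-- The boxes of a filling not containing the largest letter. -/
noncomputable def smallBoxes {N : ℕ} {C : Finset (ℕ × ℕ)} (f : {p // p ∈ C} → Fin (N + 1)) :
    Finset (ℕ × ℕ) :=
  C.filter fun c => ∃ h : c ∈ C, f ⟨c, h⟩ ≠ Fin.last N

theorem mem_smallBoxes {N : ℕ} {C : Finset (ℕ × ℕ)} {f : {p // p ∈ C} → Fin (N + 1)}
    {c : {p // p ∈ C}} : (c : ℕ × ℕ) ∈ smallBoxes f ↔ f c ≠ Fin.last N := by
  simp [smallBoxes, c.2]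

theorem smallBoxes_extendFilling {N : ℕ} {C D : Finset (ℕ × ℕ)} (hD : D ⊆ C)
    (g : {p // p ∈ D} → Fin N) : smallBoxes (extendFilling g : {p // p ∈ C} → _) = D := by
  ext c
  by_cases hc : c ∈ C
  · rw [mem_smallBoxes (c := ⟨c, hc⟩)]
    by_cases h : c ∈ D
    · rw [extendFilling_of_mem _ _ h]
      exact ⟨fun _ => h, fun _ => (Fin.castSucc_lt_last _).ne⟩
    · rw [extendFilling_of_notMem _ _ h]
      simp [h]
  · exact ⟨fun h => absurd (Finset.mem_filter.1 h).1 hc, fun h => absurd (hD h) hc⟩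

theorem extendFilling_injective {N : ℕ} {C D : Finset (ℕ × ℕ)} (hD : D ⊆ C) :
    Function.Injective
      (extendFilling : ({p // p ∈ D} → Fin N) → {p // p ∈ C} → Fin (N + 1)) := by
  intro g g' h
  ext c
  have := congrFun h ⟨c, hD c.2⟩
  rw [extendFilling_of_mem g ⟨c, hD c.2⟩ c.2, extendFilling_of_mem g' ⟨c, hD c.2⟩ c.2] at this
  exact congrArg Fin.val (Fin.castSucc_injective _ this)

theorem exists_extendFilling {N : ℕ} {C : Finset (ℕ × ℕ)} (f : {p // p ∈ C} → Fin (N + 1)) :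
    ∃ g : {p // p ∈ smallBoxes f} → Fin N, extendFilling g = f := by
  have hsub : smallBoxes f ⊆ C := Finset.filter_subset _ _
  refine ⟨fun c => (f ⟨c, hsub c.2⟩).castPred (mem_smallBoxes.1 c.2), ?_⟩
  funext c
  by_cases h : (c : ℕ × ℕ) ∈ smallBoxes f
  · rw [extendFilling_of_mem _ _ h, Fin.castSucc_castPred]
  · rw [extendFilling_of_notMem _ _ h]
    rw [mem_smallBoxes, not_not] at h
    exact h.symm

theorem isTab_extendFilling {N : ℕ} {C D : Finset (ℕ × ℕ)} (hD : D ⊆ C)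
    (g : {p // p ∈ D} → Fin N) :
    IsTab prim (fun c : {p // p ∈ C} => (extendFilling g c : ℕ)) ↔
      IsStrip (prim N) C D ∧ IsTab prim (fun c => (g c : ℕ)) := by
  have hin (c : {p // p ∈ C}) (h : (c : ℕ × ℕ) ∈ D) :
      (extendFilling g c : ℕ) = g ⟨c, h⟩ := by
    rw [extendFilling_of_mem _ _ h, Fin.val_castSucc]
  have hout (c : {p // p ∈ C}) (h : (c : ℕ × ℕ) ∉ D) : (extendFilling g c : ℕ) = N := by
    rw [extendFilling_of_notMem _ _ h, Fin.val_last]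
  have key (P : ℕ × ℕ → ℕ × ℕ → Prop) (pr : ℕ → Prop) :
      (∀ p q : {p // p ∈ C}, P p q →
        (extendFilling g p : ℕ) ≤ extendFilling g q ∧
          ¬((extendFilling g p : ℕ) = extendFilling g q ∧ pr (extendFilling g p : ℕ))) ↔
      (∀ p ∈ C, ∀ q ∈ C, P p q → (q ∈ D → p ∈ D) ∧ ¬(p ∉ D ∧ q ∉ D ∧ pr N)) ∧
        (∀ p q : {p // p ∈ D}, P p q →
          (g p : ℕ) ≤ g q ∧ ¬((g p : ℕ) = g q ∧ pr (g p : ℕ))) := by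
    constructor
    · intro H
      refine ⟨fun p hp q hq hpq => ?_, fun p q hpq => ?_⟩
      · have := H ⟨p, hp⟩ ⟨q, hq⟩ hpq
        by_cases hpD : p ∈ D
        · exact ⟨fun _ => hpD, fun h => h.1 hpD⟩
        · rw [hout ⟨p, hp⟩ hpD] at this
          by_cases hqD : q ∈ D
          · rw [hin ⟨q, hq⟩ hqD] at this
            exact absurd (g ⟨q, hqD⟩).isLt (not_lt.2 this.1)
          · rw [hout ⟨q, hq⟩ hqD] at this
            exact ⟨fun h => absurd h hqD, fun h => this.2 ⟨rfl, h.2.2⟩⟩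
      · have := H ⟨p, hD p.2⟩ ⟨q, hD q.2⟩ hpq
        rwa [hin _ p.2, hin _ q.2] at this
    · rintro ⟨H1, H2⟩ p q hpq
      have h1 := H1 p p.2 q q.2 hpq
      by_cases hqD : (q : ℕ × ℕ) ∈ D
      · have hpD := h1.1 hqD
        rw [hin _ hpD, hin _ hqD]
        exact H2 ⟨p, hpD⟩ ⟨q, hqD⟩ hpq
      · rw [hout _ hqD]
        by_cases hpD : (p : ℕ × ℕ) ∈ D
        · rw [hin _ hpD]
          have := (g ⟨p, hpD⟩).isLt
          exact ⟨this.le, fun h => this.ne h.1⟩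
        · rw [hout _ hpD]
          exact ⟨le_rfl, fun h => h1.2 ⟨hpD, hqD, h.2⟩⟩
  rw [IsTab, key (fun p q => q.1 = p.1 ∧ q.2 = p.2 + 1) prim,
    key (fun p q => q.1 = p.1 + 1 ∧ q.2 = p.2) (fun t => ¬prim t), IsStrip, IsTab]
  tauto

theorem prod_extendFilling {N : ℕ} {C D : Finset (ℕ × ℕ)} (hD : D ⊆ C)
    (g : {p // p ∈ D} → Fin N) :
    ∏ c : {p // p ∈ C}, z (extendFilling g c : ℕ) (content c) =
      (∏ c ∈ C \ D, z N (content c)) * ∏ c : {p // p ∈ D}, z (g c : ℕ) (content c) := by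
  let F : ℕ × ℕ → R := fun c =>
    z (if h : c ∈ D then (g ⟨c, h⟩ : ℕ) else N) (content c)
  have hC : ∏ c : {p // p ∈ C}, z (extendFilling g c : ℕ) (content c) = ∏ c ∈ C, F c := by
    refine (Finset.prod_congr rfl fun c _ => ?_).trans (Finset.prod_coe_sort C F)
    by_cases h : (c : ℕ × ℕ) ∈ D
    · simp [F, extendFilling_of_mem _ _ h, h]
    · simp [F, extendFilling_of_notMem _ _ h, h]
  rw [hC, ← Finset.prod_sdiff hD, ← Finset.prod_coe_sort D]
  congr 1
  · refine Finset.prod_congr rfl fun c hc => ?_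
    simp [F, (Finset.mem_sdiff.1 hc).2]
  · refine Finset.prod_congr rfl fun c _ => ?_
    simp [F]

/-- Branching rule: sort the tableaux by the set of boxes not occupied by the largest letter. -/
theorem tabSum_succ (N : ℕ) (C : Finset (ℕ × ℕ)) :
    tabSum prim z (N + 1) C = ∑ D ∈ C.powerset with IsStrip (prim N) C D,
      (∏ c ∈ C \ D, z N (content c)) * tabSum prim z N D := by
  rw [tabSum, ← Finset.sum_fiberwise_of_maps_to (g := smallBoxes)
    (t := C.powerset.filter fun D => IsStrip (prim N) C D)]
  · refine Finset.sum_congr rfl fun D hD => ?_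
    simp only [Finset.mem_filter, Finset.mem_powerset] at hD
    rw [tabSum, Finset.mul_sum]
    symm
    refine Finset.sum_bij (fun g _ => extendFilling g) ?_ ?_ ?_ ?_
    · intro g hg
      simp only [Finset.mem_filter, Finset.mem_univ, true_and] at hg ⊢
      exact ⟨(isTab_extendFilling prim hD.1 g).2 ⟨hD.2, hg⟩, smallBoxes_extendFilling hD.1 g⟩
    · exact fun g _ g' _ h => extendFilling_injective hD.1 h
    · intro f hf
      simp only [Finset.mem_filter, Finset.mem_univ, true_and] at hf
      obtain ⟨hf, rfl⟩ := hf
      obtain ⟨g, hg⟩ := exists_extendFilling f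
      refine ⟨g, ?_, hg⟩
      rw [← hg, isTab_extendFilling prim hD.1] at hf
      simpa using hf.2
    · exact fun g _ => (prod_extendFilling z hD.1 g).symm
  · intro f hf
    simp only [Finset.mem_filter, Finset.mem_univ, true_and, Finset.mem_powerset] at hf ⊢
    have hsub : smallBoxes f ⊆ C := Finset.filter_subset _ _
    obtain ⟨g, hg⟩ := exists_extendFilling f
    rw [← hg, isTab_extendFilling prim hsub] at hf
    exact ⟨hsub, hf.1⟩

end Branching

/-- The shifted diagram with row lengths `l`. -/
def cells {k : ℕ} (l : Fin k → ℕ) : Finset (ℕ × ℕ) :=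
  Finset.univ.biUnion fun i : Fin k =>
    (Finset.range (l i)).image fun c => ((i : ℕ), (i : ℕ) + c)

theorem mem_cells {k : ℕ} {l : Fin k → ℕ} {q : ℕ × ℕ} :
    q ∈ cells l ↔ ∃ i : Fin k, ∃ c < l i, q = ((i : ℕ), (i : ℕ) + c) := by
  simp [cells, eq_comm]

theorem mk_mem_cells {k : ℕ} {l : Fin k → ℕ} {i : Fin k} {c : ℕ} :
    ((i : ℕ), (i : ℕ) + c) ∈ cells l ↔ c < l i := by
  rw [mem_cells]
  constructor
  · rintro ⟨j, d, hd, h⟩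
    obtain rfl : i = j := Fin.ext (congrArg Prod.fst h)
    obtain rfl : c = d := by simpa using congrArg Prod.snd h
    exact hd
  · exact fun h => ⟨i, c, h, rfl⟩

theorem cells_injective {k : ℕ} : Function.Injective (cells : (Fin k → ℕ) → _) := by
  intro l l' h
  have key (i : Fin k) (c : ℕ) : c < l i ↔ c < l' i := by
    rw [← mk_mem_cells, h, mk_mem_cells]
  funext i
  have h1 := key i (l i)
  have h2 := key i (l' i)
  omega

theorem cells_subset {k : ℕ} {l μ : Fin k → ℕ} (h : ∀ i, μ i ≤ l i) : cells μ ⊆ cells l := by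
  intro q hq
  obtain ⟨i, c, hc, rfl⟩ := mem_cells.1 hq
  exact mk_mem_cells.2 (hc.trans_le (h i))

theorem exists_cells_eq {k : ℕ} {l : Fin k → ℕ} {pr : Prop} {D : Finset (ℕ × ℕ)}
    (hD : D ⊆ cells l) (hs : IsStrip pr (cells l) D) :
    ∃ μ : Fin k → ℕ, (∀ i, μ i ≤ l i) ∧ cells μ = D := by
  have hex (i : Fin k) : ∃ c, ((i : ℕ), (i : ℕ) + c) ∉ D :=
    ⟨l i, fun h => lt_irrefl _ (mk_mem_cells.1 (hD h))⟩
  have hleft (i : Fin k) (c : ℕ) (h : ((i : ℕ), (i : ℕ) + (c + 1)) ∈ D) :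
      ((i : ℕ), (i : ℕ) + c) ∈ D := by
    have hc := mk_mem_cells.1 (hD h)
    exact (hs.1 _ (mk_mem_cells.2 (by omega : c < l i)) _ (hD h) ⟨rfl, by simp; omega⟩).1 h
  have hdown (i : Fin k) (c d : ℕ) (h : ((i : ℕ), (i : ℕ) + (c + d)) ∈ D) :
      ((i : ℕ), (i : ℕ) + c) ∈ D := by
    induction d with
    | zero => exact h
    | succ d ih => exact ih (hleft i _ h)
  refine ⟨fun i => Nat.find (hex i), fun i => Nat.find_min' _ fun h =>
    lt_irrefl _ (mk_mem_cells.1 (hD h)), ?_⟩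
  ext q
  constructor
  · intro hq
    obtain ⟨i, c, hc, rfl⟩ := mem_cells.1 hq
    exact not_not.1 (Nat.find_min (hex i) hc)
  · intro hq
    obtain ⟨i, c, hc, rfl⟩ := mem_cells.1 (hD hq)
    refine mk_mem_cells.2 (not_le.1 fun hle => Nat.find_spec (hex i) ?_)
    refine hdown i _ (c - Nat.find (hex i)) ?_
    rwa [Nat.add_sub_cancel' hle]

theorem prod_cells_sdiff {R : Type*} [CommRing R] {k : ℕ} {l μ : Fin k → ℕ} (w : ℤ → R) :
    ∏ c ∈ cells l \ cells μ, w (content c) =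
      ∏ i : Fin k, ∏ c ∈ Finset.Ico (μ i) (l i), w c := by
  rw [Finset.prod_sigma']
  symm
  refine Finset.prod_bij (fun a _ => ((a.1 : ℕ), (a.1 : ℕ) + a.2)) ?_ ?_ ?_ ?_
  · rintro ⟨i, c⟩ h
    simp only [Finset.mem_sigma, Finset.mem_univ, true_and, Finset.mem_Ico] at h
    rw [Finset.mem_sdiff, mk_mem_cells, mk_mem_cells]
    exact ⟨h.2, not_lt.2 h.1⟩
  · rintro ⟨i, c⟩ _ ⟨j, d⟩ _ h
    obtain rfl : i = j := Fin.ext (congrArg Prod.fst h)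
    obtain rfl : c = d := by simpa using congrArg Prod.snd h
    rfl
  · intro q hq
    rw [Finset.mem_sdiff] at hq
    obtain ⟨i, c, hc, rfl⟩ := mem_cells.1 hq.1
    rw [mk_mem_cells, mk_mem_cells, not_lt] at hq
    exact ⟨⟨i, c⟩, by simp [hc, hq.2], rfl⟩
  · rintro ⟨i, c⟩ _
    simp [content]

/-- Row lengths of a strict partition all of whose nonzero parts are among the first `p`. -/
structure IsStrict {k : ℕ} (p : ℕ) (l : Fin k → ℕ) : Prop where
  anti : ∀ i j : Fin k, i < j → (j : ℕ) < p → l j < l i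
  eq_zero : ∀ i : Fin k, p ≤ i → l i = 0

/-- The row-length form of `IsStrip`. -/
structure Interlace (pr : Prop) {k : ℕ} (p : ℕ) (l μ : Fin k → ℕ) : Prop where
  le : ∀ i, μ i ≤ l i
  vert : pr → (∀ i, l i ≤ μ i + 1) ∧ ∀ i j : Fin k, i < j → (j : ℕ) < p → μ j < μ i
  horiz : ¬pr → ∀ i j : Fin k, (j : ℕ) = i + 1 → (j : ℕ) < p → l j < μ i

theorem Interlace.isStrict {pr : Prop} {k p : ℕ} {l μ : Fin k → ℕ} (hl : IsStrict p l)
    (h : Interlace pr p l μ) : IsStrict p μ := by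
  refine ⟨fun i j hij hj => ?_, fun i hi => Nat.le_zero.1 (hl.eq_zero i hi ▸ h.le i)⟩
  by_cases hp : pr
  · exact (h.vert hp).2 i j hij hj
  · have hij' : (i : ℕ) < j := hij
    have h1 := h.horiz hp i ⟨i + 1, by omega⟩ rfl (by simp only; omega)
    have h2 := h.le j
    rcases Nat.lt_or_ge ((i : ℕ) + 1) j with h3 | h3
    · have := hl.anti ⟨i + 1, by omega⟩ j h3 hj
      omega
    · have e : (⟨i + 1, by omega⟩ : Fin k) = j := Fin.ext (by simp only; omega)
      rw [e] at h1
      omega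

theorem isStrip_cells_iff {pr : Prop} {k p : ℕ} {l μ : Fin k → ℕ} (hl : IsStrict p l)
    (hpos : ∀ i : Fin k, (i : ℕ) < p → 0 < l i) (hle : ∀ i, μ i ≤ l i) :
    IsStrip pr (cells l) (cells μ) ↔ Interlace pr p l μ := by
  have hval (i : Fin k) (h : 0 < l i) : (i : ℕ) < p := by
    by_contra hi
    have := hl.eq_zero i (not_lt.1 hi)
    omega
  constructor
  · rintro ⟨hr, hc⟩
    have hcol (i j : Fin k) (hj : (j : ℕ) = i + 1) (c : ℕ) (h : c < l j) :
        (c < μ j → c + 1 < μ i) ∧ ¬(¬c + 1 < μ i ∧ ¬c < μ j ∧ ¬pr) := by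
      have hij : l j < l i := hl.anti i j (Fin.lt_def.2 (by omega)) (hval j (by omega))
      have := hc ((i : ℕ), (i : ℕ) + (c + 1)) (mk_mem_cells.2 (by omega))
        ((j : ℕ), (j : ℕ) + c) (mk_mem_cells.2 h) ⟨hj, by simp only; omega⟩
      simpa only [mk_mem_cells] using this
    have hadj (i j : Fin k) (hj : (j : ℕ) = i + 1) (hjp : (j : ℕ) < p)
        (hv : ∀ i, l i ≤ μ i + 1) : μ j < μ i := by
      have h0 := hpos j hjp
      have hij : l j < l i := hl.anti i j (Fin.lt_def.2 (by omega)) hjp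
      rcases Nat.eq_zero_or_pos (μ j) with h | h
      · have := hv i
        omega
      · have := (hcol i j hj (μ j - 1) (by have := hle j; omega)).1 (by omega)
        omega
    refine ⟨hle, fun hpr => ?_, fun hpr i j hj hjp => ?_⟩
    · have hv (i : Fin k) : l i ≤ μ i + 1 := by
        by_contra! h
        have := hr ((i : ℕ), (i : ℕ) + μ i) (mk_mem_cells.2 (by omega))
          ((i : ℕ), (i : ℕ) + (μ i + 1)) (mk_mem_cells.2 (by omega)) ⟨rfl, by simp only; omega⟩
        refine this.2 ⟨?_, ?_, hpr⟩ <;> rw [mk_mem_cells] <;> omega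
      refine ⟨hv, fun i j hij hjp => ?_⟩
      have hij' : (i : ℕ) < j := hij
      rcases Nat.lt_or_ge ((i : ℕ) + 1) j with h3 | h3
      · have h1 := hadj i ⟨i + 1, by omega⟩ rfl (by simp only; omega) hv
        have h2 := hl.anti ⟨i + 1, by omega⟩ j h3 hjp
        have h4 := hle j
        have h5 := hv ⟨i + 1, by omega⟩
        omega
      · exact hadj i j (by omega) hjp hv
    · have h0 := hpos j hjp
      have := (hcol i j hj (l j - 1) (by omega))
      by_contra! hlt
      refine this.2 ⟨by omega, fun h => ?_, hpr⟩
      have := this.1 h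
      omega
  · intro h
    constructor
    · rintro q hq q' hq' ⟨h1, h2⟩
      obtain ⟨i, c, hci, rfl⟩ := mem_cells.1 hq
      obtain ⟨j, d, hdj, rfl⟩ := mem_cells.1 hq'
      obtain rfl : j = i := Fin.ext h1
      obtain rfl : d = c + 1 := by simp only at h2; omega
      simp only [mk_mem_cells]
      refine ⟨fun h => by omega, fun ⟨ha, hb, hpr⟩ => ?_⟩
      have := (h.vert hpr).1 j
      omega
    · rintro q hq q' hq' ⟨h1, h2⟩
      obtain ⟨i, c, hci, rfl⟩ := mem_cells.1 hq
      obtain ⟨j, d, hdj, rfl⟩ := mem_cells.1 hq'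
      simp only at h1 h2
      obtain rfl : c = d + 1 := by omega
      have hjp := hval j (by omega)
      have hstrict := (h.isStrict hl).anti i j (Fin.lt_def.2 (by omega)) hjp
      simp only [mk_mem_cells]
      refine ⟨fun h => by omega, fun ⟨ha, hb, hpr⟩ => ?_⟩
      have := h.horiz hpr i j h1 hjp
      omega

/-- Branching rule for shifted shapes, in terms of row lengths. -/
theorem tabSum_succ_cells {R : Type*} [CommRing R] (prim : ℕ → Prop) (z : ℕ → ℤ → R) (N : ℕ)
    {k p : ℕ} {l : Fin k → ℕ} (hl : IsStrict p l)
    (hpos : ∀ i : Fin k, (i : ℕ) < p → 0 < l i) :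
    tabSum prim z (N + 1) (cells l) =
      ∑ μ ∈ Fintype.piFinset (fun i => Finset.range (l i + 1)) with Interlace (prim N) p l μ,
        (∏ i : Fin k, ∏ c ∈ Finset.Ico (μ i) (l i), z N c) * tabSum prim z N (cells μ) := by
  rw [tabSum_succ]
  symm
  refine Finset.sum_bij (fun μ _ => cells μ) ?_ ?_ ?_ ?_
  · intro μ hμ
    have h := (Finset.mem_filter.1 hμ).2
    rw [Finset.mem_filter, Finset.mem_powerset]
    exact ⟨cells_subset h.le, (isStrip_cells_iff hl hpos h.le).2 h⟩
  · exact fun μ _ μ' _ h => cells_injective h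
  · intro D hD
    rw [Finset.mem_filter, Finset.mem_powerset] at hD
    obtain ⟨μ, hle, rfl⟩ := exists_cells_eq hD.1 hD.2
    refine ⟨μ, ?_, rfl⟩
    rw [Finset.mem_filter, Fintype.mem_piFinset]
    exact ⟨fun i => Finset.mem_range_succ_iff.2 (hle i), (isStrip_cells_iff hl hpos hle).1 hD.2⟩
  · intro μ hμ
    rw [prod_cells_sdiff]

section Operators

variable {R : Type*} [CommRing R]

/-- An alternating map is unchanged when multiples of later arguments are subtracted from
arguments. -/
theorem AlternatingMap.map_eq_of_sub_smul_later {V W : Type*} [AddCommGroup V] [Module R V]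
    [AddCommGroup W] [Module R W] {k : ℕ} (Φ : V [⋀^Fin k]→ₗ[R] W) (v u : Fin k → V)
    (h : ∀ i, u i = v i ∨ ∃ j, i < j ∧ ∃ c : R, u i = v i - c • v j) : Φ u = Φ v := by
  have key (t : ℕ) (ht : t ≤ k) : Φ (fun i => if (i : ℕ) < t then u i else v i) = Φ v := by
    induction t with
    | zero => simp
    | succ t ih =>
      rw [← ih (by omega)]
      set w : Fin k → V := fun i => if (i : ℕ) < t then u i else v i with hw
      let a : Fin k := ⟨t, ht⟩
      have hwa : w a = v a := by simp [hw, a]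
      have hupd : (fun i : Fin k => if (i : ℕ) < t + 1 then u i else v i) =
          Function.update w a (u a) := by
        funext i
        rcases eq_or_ne i a with rfl | hne
        · simp [a]
        · have : (i : ℕ) ≠ t := fun e => hne (Fin.ext e)
          rw [Function.update_of_ne hne]
          simp only [hw]
          congr 1
          exact propext ⟨fun _ => by omega, fun _ => by omega⟩
      rw [hupd]
      rcases h a with ha | ⟨j, hj, c, ha⟩
      · rw [ha, ← hwa, Function.update_eq_self]
      · have hwj : w j = v j := by
          have : ¬(j : ℕ) < t := not_lt.2 (Fin.le_def.1 hj.le)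
          simp [hw, this]
        rw [ha, Φ.map_update_sub, Φ.map_update_smul, ← hwj, Φ.map_update_self w hj.ne, smul_zero,
          sub_zero, ← hwa, Function.update_eq_self]
  have := key k le_rfl
  simpa using this

/-- The basis vectors attached to the rows: `some r` for a row of length `r` among the first `p`,
and the padding symbol `none` for the others. -/
noncomputable def rowVec (R : Type*) [CommRing R] {k : ℕ} (p : ℕ) (l : Fin k → ℕ) (i : Fin k) :
    Option ℕ →₀ R :=
  Finsupp.single (if (i : ℕ) < p then some (l i) else none) 1

variable (prim : ℕ → Prop) (z : ℕ → ℤ → R)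

/-- The image of a basis vector under removal of the letter `N` from a row. -/
noncomputable def stepVec (N : ℕ) : Option ℕ → Option ℕ →₀ R
  | none => Finsupp.single none 1
  | some 0 => Finsupp.single none 1
  | some (a + 1) => ∑ b ∈ Finset.range (a + 1 + 1) with prim N → a + 1 ≤ b + 1,
      (∏ c ∈ Finset.Ico b (a + 1), z N c) • Finsupp.single (some b) 1

/-- Removal of the letter `N` from a row, as a linear operator. -/
noncomputable def stepMap (N : ℕ) : (Option ℕ →₀ R) →ₗ[R] (Option ℕ →₀ R) :=
  Finsupp.linearCombination R (stepVec prim z N)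

theorem stepMap_single (N : ℕ) (o : Option ℕ) :
    stepMap prim z N (Finsupp.single o 1) = stepVec prim z N o := by
  simp [stepMap]

theorem stepMap_rowVec (N : ℕ) {k p : ℕ} {l : Fin k → ℕ} (hl : IsStrict p l)
    (hpos : ∀ i : Fin k, (i : ℕ) < p → 0 < l i) (i : Fin k) :
    stepMap prim z N (rowVec R p l i) =
      ∑ b ∈ Finset.range (l i + 1) with prim N → l i ≤ b + 1,
        (∏ c ∈ Finset.Ico b (l i), z N c) •
          (Finsupp.single (if (i : ℕ) < p then some b else none) 1 : Option ℕ →₀ R) := by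
  rw [rowVec, stepMap_single]
  split_ifs with hi
  · obtain ⟨a, ha⟩ := Nat.exists_eq_succ_of_ne_zero (hpos i hi).ne'
    rw [ha]
    rfl
  · rw [hl.eq_zero i (not_lt.1 hi), Finset.filter_true_of_mem (by simp)]
    simp [stepVec]

theorem alternatingMap_stepMap (N : ℕ) {k p : ℕ} {l : Fin k → ℕ} (hl : IsStrict p l)
    (hpos : ∀ i : Fin k, (i : ℕ) < p → 0 < l i) (Φ : (Option ℕ →₀ R) [⋀^Fin k]→ₗ[R] R) :
    Φ (fun i => stepMap prim z N (rowVec R p l i)) =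
      ∑ μ ∈ Fintype.piFinset (fun i => Finset.range (l i + 1)) with Interlace (prim N) p l μ,
        (∏ i : Fin k, ∏ c ∈ Finset.Ico (μ i) (l i), z N c) * Φ (rowVec R p μ) := by
  have expand (A : Fin k → Finset ℕ) :
      Φ (fun i => ∑ b ∈ A i, (∏ c ∈ Finset.Ico b (l i), z N c) •
          (Finsupp.single (if (i : ℕ) < p then some b else none) 1 : Option ℕ →₀ R)) =
        ∑ μ ∈ Fintype.piFinset A,
          (∏ i : Fin k, ∏ c ∈ Finset.Ico (μ i) (l i), z N c) * Φ (rowVec R p μ) := by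
    refine (Φ.toMultilinearMap.map_sum_finset (fun i b => (∏ c ∈ Finset.Ico b (l i), z N c) •
      (Finsupp.single (if (i : ℕ) < p then some b else none) 1 : Option ℕ →₀ R)) A).trans ?_
    exact Finset.sum_congr rfl fun μ _ => Φ.map_smul_univ _ _
  by_cases hpr : prim N
  · simp only [stepMap_rowVec prim z N hl hpos]
    rw [expand]
    symm
    refine Finset.sum_subset (fun μ hμ => ?_) (fun μ hμ hμ' => ?_)
    · rw [Finset.mem_filter, Fintype.mem_piFinset] at hμ
      rw [Fintype.mem_piFinset]
      exact fun i => Finset.mem_filter.2 ⟨hμ.1 i, fun _ => (hμ.2.vert hpr).1 i⟩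
    · simp only [Fintype.mem_piFinset, Finset.mem_filter, Finset.mem_range_succ_iff] at hμ hμ'
      have hnot : ¬∀ i j : Fin k, i < j → (j : ℕ) < p → μ j < μ i := fun h =>
        hμ' ⟨fun i => (hμ i).1, fun i => (hμ i).1, fun _ => ⟨fun i => (hμ i).2 hpr, h⟩,
          fun h' => absurd hpr h'⟩
      push Not at hnot
      obtain ⟨i, j, hij, hj, hle⟩ := hnot
      have h1 := hl.anti i j hij hj
      have h2 := (hμ i).2 hpr
      have h3 := (hμ j).1
      have hi : (i : ℕ) < p := (Fin.lt_def.1 hij).trans hj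
      rw [Φ.map_eq_zero_of_eq (rowVec R p μ) (i := i) (j := j) _ hij.ne, mul_zero]
      rw [rowVec, rowVec, if_pos hi, if_pos hj, (by omega : μ i = μ j)]
  · let A : Fin k → Finset ℕ := fun i =>
      (Finset.range (l i + 1)).filter fun b => ∀ j : Fin k, (j : ℕ) = i + 1 → (j : ℕ) < p → l j < b
    have hA : (Fintype.piFinset fun i => Finset.range (l i + 1)).filter
        (fun μ => Interlace (prim N) p l μ) = Fintype.piFinset A := by
      ext μ
      simp only [Fintype.mem_piFinset, Finset.mem_filter, Finset.mem_range_succ_iff, A]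
      exact ⟨fun h i => ⟨h.1 i, fun j => h.2.horiz hpr i j⟩,
        fun h => ⟨fun i => (h i).1, fun i => (h i).1, fun h' => absurd h' hpr,
          fun _ i => (h i).2⟩⟩
    rw [hA, ← expand]
    symm
    refine Φ.map_eq_of_sub_smul_later _ _ fun i => ?_
    have hfull (i : Fin k) : stepMap prim z N (rowVec R p l i) = ∑ b ∈ Finset.range (l i + 1),
        (∏ c ∈ Finset.Ico b (l i), z N c) •
          (Finsupp.single (if (i : ℕ) < p then some b else none) 1 : Option ℕ →₀ R) := by
      rw [stepMap_rowVec prim z N hl hpos, Finset.filter_true_of_mem]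
      exact fun _ _ h => absurd h hpr
    by_cases hex : ∃ j : Fin k, (j : ℕ) = i + 1 ∧ (j : ℕ) < p
    · obtain ⟨j, hj, hjp⟩ := hex
      have hij : i < j := Fin.lt_def.2 (by omega)
      have hlt := hl.anti i j hij hjp
      refine Or.inr ⟨j, hij, ∏ c ∈ Finset.Ico (l j) (l i), z N c, ?_⟩
      have hip : (i : ℕ) < p := by omega
      rw [hfull, hfull, eq_sub_iff_add_eq, Finset.smul_sum]
      simp only [if_pos hjp, if_pos hip]
      rw [← Finset.sum_filter_add_sum_filter_not (Finset.range (l i + 1)) (fun b => l j < b)]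
      congr 1
      · refine Finset.sum_congr (Finset.filter_congr fun b _ => ?_) fun _ _ => rfl
        refine ⟨fun h => h j hj hjp, fun h j' hj' _ => ?_⟩
        rwa [Fin.ext (hj'.trans hj.symm)]
      · refine Finset.sum_congr ?_ fun b hb => ?_
        · ext b
          simp only [Finset.mem_range, Finset.mem_filter]
          omega
        · have hb' : b ≤ l j := not_lt.1 (Finset.mem_filter.1 hb).2
          rw [smul_smul, mul_comm, Finset.prod_Ico_consecutive _ hb' hlt.le]
    · refine Or.inl ?_
      rw [hfull]
      refine Finset.sum_congr (Finset.filter_true_of_mem fun b _ j hj hjp => ?_) fun _ _ => rfl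
      exact absurd ⟨j, hj, hjp⟩ hex

/-- The alternating form pairing the empty row with the padding symbol. -/
noncomputable def emptyForm (R : Type*) [CommRing R] : LinearMap.BilinForm R (Option ℕ →₀ R) :=
  LinearMap.mk₂ R (fun u v => u (some 0) * v none - u none * v (some 0))
    (fun _ _ _ => by simp only [Finsupp.add_apply]; ring)
    (fun _ _ _ => by simp only [Finsupp.smul_apply, smul_eq_mul]; ring)
    (fun _ _ _ => by simp only [Finsupp.add_apply]; ring)
    (fun _ _ _ => by simp only [Finsupp.smul_apply, smul_eq_mul]; ring)

theorem emptyForm_apply (u v : Option ℕ →₀ R) :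
    emptyForm R u v = u (some 0) * v none - u none * v (some 0) := rfl

/-- The alternating form whose values on pairs of rows are the two-row tableau sums with letters
less than `N`. -/
noncomputable def rowForm : ℕ → LinearMap.BilinForm R (Option ℕ →₀ R)
  | 0 => emptyForm R
  | N + 1 => (rowForm N).compl₁₂ (stepMap prim z N) (stepMap prim z N) + emptyForm R

theorem rowForm_succ_apply (N : ℕ) (u v : Option ℕ →₀ R) :
    rowForm prim z (N + 1) u v =
      rowForm prim z N (stepMap prim z N u) (stepMap prim z N v) + emptyForm R u v := rfl

theorem rowForm_isAlt (N : ℕ) : (rowForm prim z N).IsAlt := by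
  have h0 : (emptyForm R).IsAlt := fun v => by rw [emptyForm_apply]; ring
  induction N with
  | zero => exact h0
  | succ N ih =>
    intro v
    rw [rowForm_succ_apply, ih, h0, add_zero]

theorem rowForm_zero_none (N : ℕ) :
    rowForm prim z N (Finsupp.single (some 0) 1) (Finsupp.single none 1) = 1 := by
  have h0 : emptyForm R (Finsupp.single (some 0) 1) (Finsupp.single none 1) = 1 := by
    simp [emptyForm_apply]
  cases N with
  | zero => exact h0
  | succ N =>
    rw [rowForm_succ_apply, h0, stepMap_single, stepMap_single, stepVec, stepVec, rowForm_isAlt,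
      zero_add]

theorem rowForm_some_zero (N a : ℕ) (ha : 0 < a) :
    rowForm prim z N (Finsupp.single (some a) 1) (Finsupp.single (some 0) 1) =
      rowForm prim z N (Finsupp.single (some a) 1) (Finsupp.single none 1) := by
  have h0 (v : Option ℕ →₀ R) : emptyForm R (Finsupp.single (some a) 1) v = 0 := by
    simp [emptyForm_apply, ha.ne']
  cases N with
  | zero => exact (h0 _).trans (h0 _).symm
  | succ N =>
    simp only [rowForm_succ_apply, h0, stepMap_single, stepVec]

theorem wick_congr {V W : Type*} [AddCommGroup V] [Module R V] [AddCommGroup W] [Module R W]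
    {B : LinearMap.BilinForm R V} {B' : LinearMap.BilinForm R W} (hB : B.IsAlt) (hB' : B'.IsAlt)
    {m : ℕ} {v : Fin (2 * m) → V} {w : Fin (2 * m) → W}
    (h : ∀ i j, i < j → B (v i) (v j) = B' (w i) (w j)) :
    wick B hB (2 * m) v = wick B' hB' (2 * m) w := by
  rw [wick_eq_pfaffian, wick_eq_pfaffian]
  congr 1
  ext i j
  simp only [Matrix.of_apply]
  rcases lt_trichotomy i j with hij | rfl | hij
  · exact h i j hij
  · rw [hB, hB']
  · rw [← hB.neg_eq, ← hB'.neg_eq, h j i hij]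

theorem tabSum_cells_eq_wick_of_pos (N : ℕ)
    (ih : ∀ N', N' + 1 = N → ∀ (m p : ℕ) (l : Fin (2 * m) → ℕ), p = 2 * m ∨ p + 1 = 2 * m →
      IsStrict p l → tabSum prim z N' (cells l) =
        wick (rowForm prim z N') (rowForm_isAlt prim z N') (2 * m) (rowVec R p l))
    {m p : ℕ} {l : Fin (2 * m) → ℕ} (hp : p = 2 * m ∨ p + 1 = 2 * m) (hl : IsStrict p l)
    (hpos : ∀ i : Fin (2 * m), (i : ℕ) < p → 0 < l i) :
    tabSum prim z N (cells l) =
      wick (rowForm prim z N) (rowForm_isAlt prim z N) (2 * m) (rowVec R p l) := by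
  have h0 (i : Fin (2 * m)) (hi : (i : ℕ) < p) (v : Option ℕ →₀ R) :
      emptyForm R (rowVec R p l i) v = 0 := by
    simp [emptyForm_apply, rowVec, hi, (hpos i hi).ne']
  cases N with
  | zero =>
    rw [tabSum_zero]
    cases m with
    | zero =>
      rw [if_pos (Finset.eq_empty_of_forall_notMem fun q hq => ?_)]
      · exact (wick_zero _ _ _).symm
      · obtain ⟨i, -⟩ := mem_cells.1 hq
        exact i.elim0
    | succ m =>
      have hp0 : 0 < p := by omega
      rw [if_neg (Finset.nonempty_iff_ne_empty.1
        ⟨_, mk_mem_cells.2 (hpos (0 : Fin (2 * m + 1 + 1)) hp0)⟩)]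
      refine ((wick_succ_succ _ (rowForm_isAlt prim z 0) (k := 2 * m) _).trans
        (Finset.sum_eq_zero fun j _ => ?_)).symm
      have h' : rowForm prim z 0 (rowVec R p l (0 : Fin (2 * m + 1 + 1)))
          (rowVec R p l j.succ) = 0 := h0 (0 : Fin (2 * m + 1 + 1)) hp0 _
      rw [h', zero_mul, mul_zero]
  | succ N =>
    rw [tabSum_succ_cells prim z N hl hpos]
    have hstep : wick (rowForm prim z (N + 1)) (rowForm_isAlt prim z (N + 1)) (2 * m)
        (rowVec R p l) = wick (rowForm prim z N) (rowForm_isAlt prim z N) (2 * m)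
          (fun i => stepMap prim z N (rowVec R p l i)) := by
      refine wick_congr _ _ fun i j hij => ?_
      have hi : (i : ℕ) < p := by have := Fin.lt_def.1 hij; omega
      rw [rowForm_succ_apply, h0 i hi, add_zero]
    rw [hstep, alternatingMap_stepMap prim z N hl hpos]
    refine Finset.sum_congr rfl fun μ hμ => ?_
    rw [ih N rfl m p μ hp ((Finset.mem_filter.1 hμ).2.isStrict hl)]

theorem tabSum_cells_eq_wick_of_forall_pos (N : ℕ)
    (H : ∀ (m p : ℕ) (l : Fin (2 * m) → ℕ), p = 2 * m ∨ p + 1 = 2 * m → IsStrict p l →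
      (∀ i : Fin (2 * m), (i : ℕ) < p → 0 < l i) → tabSum prim z N (cells l) =
        wick (rowForm prim z N) (rowForm_isAlt prim z N) (2 * m) (rowVec R p l))
    (m p : ℕ) (l : Fin (2 * m) → ℕ) (hp : p = 2 * m ∨ p + 1 = 2 * m) (hl : IsStrict p l) :
    tabSum prim z N (cells l) =
      wick (rowForm prim z N) (rowForm_isAlt prim z N) (2 * m) (rowVec R p l) := by
  by_cases hpos : ∀ i : Fin (2 * m), (i : ℕ) < p → 0 < l i
  · exact H m p l hp hl hpos
  push Not at hpos
  obtain ⟨i, hip, hi⟩ := hpos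
  replace hi : l i = 0 := by omega
  have hlast (j : Fin (2 * m)) (hj : i < j) : p ≤ j := by
    by_contra hjp
    have := hl.anti i j hj (by omega)
    omega
  have hip' : (i : ℕ) + 1 = p := by
    by_contra hne
    have := hlast ⟨i + 1, by omega⟩ (Fin.lt_def.2 (Nat.lt_succ_self _))
    simp only at this
    omega
  have hpos (j : Fin (2 * m)) (hj : (j : ℕ) < i) : 0 < l j :=
    (Nat.zero_le _).trans_lt (hl.anti j i (Fin.lt_def.2 hj) hip)
  rcases hp with hp | hp
  · rw [H m i l (by omega) ⟨fun a b hab hb => hl.anti a b hab (by omega), fun a ha => ?_⟩ hpos]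
    · refine wick_congr _ _ fun a b hab => ?_
      have hab' := Fin.lt_def.1 hab
      have ha : (a : ℕ) < i := by omega
      simp only [rowVec]
      rw [if_pos ha, if_pos (show (a : ℕ) < p by omega), if_pos (show (b : ℕ) < p by omega)]
      split_ifs with hb
      · rfl
      · obtain rfl : b = i := Fin.ext (by omega)
        rw [hi, rowForm_some_zero prim z N _ (hpos a ha)]
    · obtain rfl : a = i := Fin.ext (by omega)
      exact hi
  · obtain ⟨m, rfl⟩ : ∃ m', m = m' + 1 := ⟨m - 1, by omega⟩
    let l' : Fin (2 * m) → ℕ := fun a => l (a.castSucc.castSucc : Fin (2 * m + 1 + 1))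
    have hlv (a : Fin (2 * (m + 1))) (ha : 2 * m ≤ (a : ℕ)) : l a = 0 := by
      rcases eq_or_ne a i with rfl | hne
      · exact hi
      · have : (a : ℕ) ≠ i := fun e => hne (Fin.ext e)
        exact hl.eq_zero a (by omega)
    have hcells : cells l = cells l' := by
      ext q
      rw [mem_cells, mem_cells]
      constructor
      · rintro ⟨a, c, hc, rfl⟩
        have ha : (a : ℕ) < 2 * m := by
          by_contra h
          rw [hlv a (by omega)] at hc
          omega
        exact ⟨⟨a, ha⟩, c, hc, rfl⟩
      · rintro ⟨a, c, hc, rfl⟩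
        exact ⟨a.castSucc.castSucc, c, hc, rfl⟩
    have hl' : IsStrict (2 * m) l' :=
      ⟨fun a b hab _ => hl.anti _ _ hab (by have := b.isLt; simp; omega),
        fun a ha => absurd a.isLt (by omega)⟩
    have hpos' (a : Fin (2 * m)) : 0 < l' a :=
      hpos _ (by have := a.isLt; simp; omega)
    have hv (a : Fin (2 * m)) : rowVec R p l (a.castSucc.castSucc : Fin (2 * m + 1 + 1)) =
        Finsupp.single (some (l' a)) 1 := by
      have : (a : ℕ) < p := by omega
      simp [rowVec, l', this]
    have hv1 : rowVec R p l ((Fin.last (2 * m)).castSucc : Fin (2 * m + 1 + 1)) =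
        Finsupp.single (some 0) 1 := by
      have h1 : 2 * m < p := by omega
      have h2 : l ((Fin.last (2 * m)).castSucc : Fin (2 * m + 1 + 1)) = 0 := hlv _ le_rfl
      simp [rowVec, h1, h2]
    have hv2 : rowVec R p l (Fin.last (2 * m + 1)) = Finsupp.single none 1 := by
      have h1 : ¬2 * m + 1 < p := by omega
      simp [rowVec, h1]
    rw [hcells, H m (2 * m) l' (Or.inl rfl) hl' fun a _ => hpos' a]
    refine ((wick_hyperbolic (rowForm prim z N) (rowForm_isAlt prim z N) (k := 2 * m)
      (rowVec R p l) ?_ fun a => ?_).trans ?_).symm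
    · rw [hv1, hv2, rowForm_zero_none]
    · rw [hv, hv1, hv2, rowForm_some_zero prim z N _ (hpos' a)]
    · congr 1
      funext a
      rw [hv, rowVec, if_pos a.isLt]

/-- The Pfaffian formula for tableau sums on shifted shapes. -/
theorem tabSum_cells_eq_wick (N m p : ℕ) (l : Fin (2 * m) → ℕ)
    (hp : p = 2 * m ∨ p + 1 = 2 * m) (hl : IsStrict p l) :
    tabSum prim z N (cells l) =
      wick (rowForm prim z N) (rowForm_isAlt prim z N) (2 * m) (rowVec R p l) := by
  induction N generalizing m p with
  | zero =>
    exact tabSum_cells_eq_wick_of_forall_pos prim z 0 (fun m p l hp hl hpos =>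
      tabSum_cells_eq_wick_of_pos prim z 0 (fun _ h => absurd h (Nat.succ_ne_zero _)) hp hl hpos)
      m p l hp hl
  | succ N ih =>
    refine tabSum_cells_eq_wick_of_forall_pos prim z (N + 1) (fun m p l hp hl hpos =>
      tabSum_cells_eq_wick_of_pos prim z (N + 1) (fun N' h => ?_) hp hl hpos) m p l hp hl
    obtain rfl : N' = N := by omega
    exact ih

end Operators

section Specialization

variable {R : Type*} [CommRing R]

/-- The primed alphabet as an initial segment of `ℕ`. -/
noncomputable def letterEquiv (n : ℕ) : Fin n × Bool ≃ Fin (2 * n) :=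
  Equiv.ofBijective
    (fun e => ⟨ordE e, by have := e.1.isLt; unfold ordE; split_ifs <;> omega⟩)
    ((Fintype.bijective_iff_injective_and_card _).2 ⟨fun e e' h => by
      obtain ⟨a, b⟩ := e
      obtain ⟨a', b'⟩ := e'
      have h' := congrArg Fin.val h
      simp only [ordE] at h'
      cases b <;> cases b' <;> simp [Fin.ext_iff] at h' ⊢ <;> omega, by simp [mul_comm]⟩)

theorem letterEquiv_val {n : ℕ} (e : Fin n × Bool) : (letterEquiv n e : ℕ) = ordE e := rfl

theorem ordE_mod_two {n : ℕ} (e : Fin n × Bool) : ordE e % 2 = 0 ↔ e.2 = true := by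
  unfold ordE
  split_ifs with h
  · simp [h]
  · exact iff_of_false (by omega) h

/-- The weights of letters in the initial segment of `ℕ` given by the primed alphabet. -/
noncomputable def letterWeight {n : ℕ} (X Y : Fin n → ℤ → R) (t : ℕ) (c : ℤ) : R :=
  if h : t / 2 < n then (if t % 2 = 0 then Y ⟨t / 2, h⟩ c else X ⟨t / 2, h⟩ c) else 0

theorem letterWeight_ordE {n : ℕ} (X Y : Fin n → ℤ → R) (e : Fin n × Bool) (c : ℤ) :
    letterWeight X Y (ordE e) c = if e.2 then Y e.1 c else X e.1 c := by
  have hdiv : ordE e / 2 = (e.1 : ℕ) := by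
    unfold ordE
    split_ifs <;> omega
  have hlt : ordE e / 2 < n := hdiv ▸ e.1.isLt
  have he : (⟨ordE e / 2, hlt⟩ : Fin n) = e.1 := Fin.ext hdiv
  rw [letterWeight, dif_pos hlt, he]
  simp only [ordE_mod_two]

theorem QGen_eq_tabSum {n : ℕ} (C : Finset (ℕ × ℕ)) (X Y : Fin n → ℤ → R) :
    QGen n C X Y = tabSum (fun t => t % 2 = 0) (letterWeight X Y) (2 * n) C := by
  refine Finset.sum_equiv ((Equiv.refl _).arrowCongr (letterEquiv n)) (fun T => ?_) fun T _ => ?_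
  · have heq (p q : {p // p ∈ C}) : ordE (T p) = ordE (T q) ↔ T p = T q :=
      ⟨fun h => (letterEquiv n).injective (Fin.ext h), fun h => h ▸ rfl⟩
    rw [Finset.mem_filter, Finset.mem_filter]
    simp only [Finset.mem_univ, true_and, IsTab, Equiv.arrowCongr_apply,
      Function.comp_apply, Equiv.refl_symm, Equiv.refl_apply, letterEquiv_val, heq, ordE_mod_two,
      Bool.not_eq_true]
  · refine Finset.prod_congr rfl fun c _ => ?_
    simp only [Equiv.arrowCongr_apply, Function.comp_apply, Equiv.refl_symm, Equiv.refl_apply,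
      letterEquiv_val, letterWeight_ordE]

theorem shiftedCells_eq_cells {k p : ℕ} {lam : ℕ → ℕ} (hpk : p ≤ k)
    (hle : ∀ i, i < p → lam i ≤ lam 0) (hzero : ∀ i, p ≤ i → lam i = 0) :
    shiftedCells lam (fun _ => 0) p = cells fun i : Fin k => lam i := by
  ext q
  rw [mem_cells, shiftedCells, Finset.mem_filter, Finset.mem_product, Finset.mem_range,
    Finset.mem_range]
  constructor
  · rintro ⟨⟨h1, -⟩, h2, h3⟩
    exact ⟨⟨q.1, h1.trans_le hpk⟩, q.2 - q.1, by simp only; omega,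
      Prod.ext rfl (by simp only; omega)⟩
  · rintro ⟨i, c, hc, rfl⟩
    have hi : (i : ℕ) < p := by
      by_contra h
      rw [hzero i (not_lt.1 h)] at hc
      omega
    have := hle i hi
    exact ⟨⟨hi, by simp only; omega⟩, by simp only; omega, by simp only; omega⟩

theorem qTwoRow_eq_rowForm {n a b : ℕ} (hab : b < a) (X Y : Fin n → ℤ → R) :
    qTwoRow n a b X Y = rowForm (fun t => t % 2 = 0) (letterWeight X Y) (2 * n)
      (Finsupp.single (some a) 1) (Finsupp.single (some b) 1) := by
  have hl : IsStrict 2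
      (fun i : Fin (2 * 1) => if (i : ℕ) = 0 then a else if (i : ℕ) = 1 then b else 0) := by
    refine ⟨fun i j hij hj => ?_, fun i hi => absurd i.isLt (by omega)⟩
    have := Fin.lt_def.1 hij
    have hi0 : (i : ℕ) = 0 := by omega
    have hj1 : (j : ℕ) = 1 := by omega
    simpa [hi0, hj1] using hab
  rw [qTwoRow, QGen_eq_tabSum, shiftedCells_eq_cells (k := 2 * 1) le_rfl,
    tabSum_cells_eq_wick _ _ _ 1 2 _ (Or.inl rfl) hl]
  · refine (wick_succ_succ _ (rowForm_isAlt _ _ _) (k := 0) _).trans ?_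
    simp [wick_zero, rowVec]
  · intro i hi
    interval_cases i
    · rfl
    · simpa using hab.le
  · intro i hi
    rw [if_neg (by omega), if_neg (by omega)]

end Specialization

/-- **Row-based (Schur-type) Pfaffian identity for the ninth variation
Q-function.**  For a strict partition `λ` of length `p`,
`Q_λ(X,Y) = Pf( Q_{(λ_i,λ_j)}(X,Y) )_{1 ≤ i,j ≤ l}` where `l = p` if `p` is
even and `l = p + 1` otherwise (with `λ_{p+1} = 0`), the matrix being the
antisymmetrization with entries `Q_{(λ_i,λ_j)}(X,Y)` for `i < j`. -/
theorem QGen_row_pfaffian {R : Type*} [CommRing R] (n p : ℕ) (lam : ℕ → ℕ)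
    (hlam : ∀ i j, i < j → j < p → lam j < lam i) (hlampos : ∀ i, i < p → 0 < lam i)
    (hlamlen : ∀ i, p ≤ i → lam i = 0) (X Y : Fin n → ℤ → R) :
    QGen n (shiftedCells lam (fun _ => 0) p) X Y =
      pfaffian (m := (p + 1) / 2) (Matrix.of fun i j =>
        if (i : ℕ) < (j : ℕ) then qTwoRow n (lam (i : ℕ)) (lam (j : ℕ)) X Y
        else if (i : ℕ) = (j : ℕ) then 0
        else - qTwoRow n (lam (j : ℕ)) (lam (i : ℕ)) X Y) := by
  have hle (i : ℕ) (hi : i < p) : lam i ≤ lam 0 := by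
    rcases Nat.eq_zero_or_pos i with rfl | h
    · rfl
    · exact (hlam 0 i h hi).le
  have hl : IsStrict p fun i : Fin (2 * ((p + 1) / 2)) => lam i :=
    ⟨fun i j hij hj => hlam i j hij hj, fun i hi => hlamlen i hi⟩
  rw [QGen_eq_tabSum, shiftedCells_eq_cells (k := 2 * ((p + 1) / 2)) (by omega) hle hlamlen,
    tabSum_cells_eq_wick _ _ _ _ p _ (by omega) hl, wick_eq_pfaffian]
  have entry (i j : Fin (2 * ((p + 1) / 2))) (hij : (i : ℕ) < j) :
      rowForm (fun t => t % 2 = 0) (letterWeight X Y) (2 * n)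
        (rowVec R p (fun i : Fin (2 * ((p + 1) / 2)) => lam i) i)
        (rowVec R p (fun i : Fin (2 * ((p + 1) / 2)) => lam i) j) =
      qTwoRow n (lam i) (lam j) X Y := by
    have hi : (i : ℕ) < p := by omega
    have hlt : lam j < lam i := by
      rcases lt_or_ge (j : ℕ) p with hj | hj
      · exact hlam i j hij hj
      · rw [hlamlen j hj]
        exact hlampos i hi
    rw [qTwoRow_eq_rowForm hlt, rowVec, rowVec, if_pos hi]
    split_ifs with hj
    · rfl
    · rw [hlamlen j (not_lt.1 hj), rowForm_some_zero _ _ _ _ (hlampos i hi)]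
  congr 1
  ext i j
  simp only [Matrix.of_apply]
  split_ifs with h1 h2
  · exact entry i j h1
  · rw [Fin.ext h2, rowForm_isAlt]
  · rw [← entry j i (by omega), (rowForm_isAlt _ _ _).neg_eq]
end
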